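/- arXiv:2301.06218 — 6 statements merged into one kernel-verified Lean document; each statement's English description precedes it below -/
import Mathlib

section
/- Let B ∈ F₂[x] be an even polynomial with gcd(B², σ(B²)) = 1, and let P₁, …, P_r (with 1 ≤ r ≤ 3) be pairwise distinct odd irreducible polynomials in F₂[x] none of which divides B. If A := B²·P₁⋯P_r satisfies σ(A) = A, then A is one of the five polynomials: M₅ₐ = x(x+1)²(x²+x+1), M₅ᵦ = x²(x+1)(x²+x+1), M₁₆ = x⁴(x+1)⁴(x⁴+x³+1)(x⁴+x³+x²+x+1), M₂₀ₐ = x⁴(x+1)⁶(x³+x+1)(x³+x²+1)(x⁴+x³+x²+x+1), M₂₀ᵦ = x⁶(x+1)⁴(x³+x+1)(x³+x²+1)(x⁴+x³+1). -/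
/-!
Since `σ` is multiplicative and `σ P = P + 1` for a prime `P`, perfection of `A` means
`σ (B ^ 2) * ∏ (P_i + 1) = B ^ 2 * ∏ P_i`. Each `P_i + 1` vanishes at `0` and `1`, so `X` and `X + 1`
both divide `B`; and `σ (B ^ 2)`, being coprime to `B ^ 2`, is a subproduct of the `P_i`. Every
prime power in `B` contributes a nontrivial factor `σ (Q ^ (2h))` to `σ (B ^ 2)`, so `B` has at most
three prime divisors.

The main tool is the identity `σ (Q ^ (2h)) + 1 = Q (Q + 1) σ (Q ^ (h - 1)) ^ 2`
(`geo_odd_add_one`), read modulo squares. For `Q = X` and `Q = X + 1` the classes `Q (Q + 1)` agree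
and cancel, so when `σ (X ^ (2a))` and `σ ((X + 1) ^ (2b))` are both prime, parity of multiplicities
(`odd_multiplicity_contra`) excludes a third prime divisor of `B` as well as a `P_i` not dividing
`σ (B ^ 2)`. Hence `B = X ^ a (X + 1) ^ b` and `∏ P_i = σ (B ^ 2)`.

At least one of the two factors of `σ (B ^ 2)` is prime. If `σ (X ^ (2a))` is prime and
`σ (X ^ (2a)) + 1` is a product of linear factors, then `σ (X ^ (a - 1))` is a power of `X + 1`, so
`(X + 1) ^ a = X ^ a + 1` and `a = 2 ^ k`; then `σ (X ^ (2a))` divides `X ^ (2 ^ (2k + 2)) - X`, so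
its degree `2 ^ (k + 1)` divides `2 (k + 1)` and `k ≤ 1`. If the other factor is prime too, comparing
exponents gives `a = b = 2`. If it is a product of two primes, these have the form
`X ^ i (X + 1) ^ j + 1`, and a comparison of low coefficients (`exponents_eq`) gives
`{a, b} = {2, 3}`. The substitution `X ↦ X + 1` exchanges the two linear primes.
-/

open Polynomial

/-- The sum of all divisors of a polynomial over `F₂` (junk value `0` when the
divisor set is infinite, i.e. for `A = 0`). -/
noncomputable def sigma (A : Polynomial (ZMod 2)) : Polynomial (ZMod 2) :=
  ∑ᶠ (D : Polynomial (ZMod 2)) (_ : D ∣ A), D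

/-- A binary polynomial is odd if it evaluates to `1` at both `0` and `1`. -/
def IsOdd (B : Polynomial (ZMod 2)) : Prop := B.eval 0 = 1 ∧ B.eval 1 = 1

/-- A binary polynomial is even if it is not odd. -/
def IsEven (B : Polynomial (ZMod 2)) : Prop := ¬ IsOdd B

/-! ### Units of `F₂[X]` -/

local notation "𝔽" => Polynomial (ZMod 2)

lemma eq_one_of_isUnit {f : 𝔽} (h : IsUnit f) : f = 1 := by
  obtain ⟨c, hc, rfl⟩ := Polynomial.isUnit_iff.1 h
  have h0 : c ≠ 0 := hc.ne_zero
  have h1 : c = 1 := by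
    clear h hc
    revert c
    decide
  rw [h1, C_1]

lemma eq_of_associated {f g : 𝔽} (h : Associated f g) : f = g := by
  obtain ⟨u, rfl⟩ := h
  rw [eq_one_of_isUnit u.isUnit, mul_one]

lemma two_eq : (2 : 𝔽) = 0 := CharTwo.two_eq_zero

/-! ### The divisor sum -/

lemma finite_dvd {A : 𝔽} (hA : A ≠ 0) : {D : 𝔽 | D ∣ A}.Finite := by
  have : Unique (𝔽)ˣ := ⟨⟨1⟩, fun u => Units.ext (eq_one_of_isUnit u.isUnit)⟩
  have hf : Finite {D : 𝔽 // D ∣ A} :=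
    @Finite.of_fintype _ (UniqueFactorizationMonoid.fintypeSubtypeDvd A hA)
  exact Set.finite_coe_iff.1 hf

lemma sigma_eq_sum {A : 𝔽} (s : Finset 𝔽) (hs : ∀ D, D ∈ s ↔ D ∣ A) :
    sigma A = ∑ D ∈ s, D := by
  rw [← finsum_mem_coe_finset]
  simp only [sigma, Finset.mem_coe, hs]

/-- The divisor sum is multiplicative on coprime pairs. -/
lemma sigma_mul {A B : 𝔽} (hA : A ≠ 0) (hB : B ≠ 0) (h : IsCoprime A B) :
    sigma (A * B) = sigma A * sigma B := by
  classical
  rw [sigma_eq_sum (A := A) (finite_dvd hA).toFinset (by simp),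
    sigma_eq_sum (A := B) (finite_dvd hB).toFinset (by simp),
    sigma_eq_sum (A := A * B) (finite_dvd (mul_ne_zero hA hB)).toFinset (by simp),
    Finset.sum_mul_sum, ← Finset.sum_product']
  symm
  refine Finset.sum_bij (fun p _ => p.1 * p.2) ?_ ?_ ?_ (fun _ _ => rfl)
  · rintro ⟨D, E⟩ hp
    simp only [Finset.mem_product, Set.Finite.mem_toFinset, Set.mem_ofPred_eq] at hp ⊢
    exact mul_dvd_mul hp.1 hp.2
  · rintro ⟨D, E⟩ hp ⟨D', E'⟩ hp' heq
    simp only [Finset.mem_product, Set.Finite.mem_toFinset, Set.mem_ofPred_eq] at hp hp' heq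
    have key : ∀ {D E D' E' : 𝔽}, D ∣ A → E' ∣ B → D * E = D' * E' → D ∣ D' := by
      intro D E D' E' h1 h2 h3
      exact (h.of_isCoprime_of_dvd_left h1 |>.of_isCoprime_of_dvd_right h2).dvd_of_dvd_mul_right
        (h3 ▸ dvd_mul_right D E)
    have hD : D = D' := eq_of_associated
      (associated_of_dvd_dvd (key hp.1 hp'.2 heq) (key hp'.1 hp.2 heq.symm))
    subst hD
    have hD0 : D ≠ 0 := ne_zero_of_dvd_ne_zero hA hp.1
    rw [mul_left_cancel₀ hD0 heq]
  · intro F hF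
    simp only [Set.Finite.mem_toFinset, Set.mem_ofPred_eq] at hF
    obtain ⟨D, E, h1, h2, rfl⟩ := exists_dvd_and_dvd_of_dvd_mul hF
    exact ⟨(D, E), by simp [h1, h2], rfl⟩

/-- The geometric sum `1 + Q + ⋯ + Q ^ (n - 1)`; for irreducible `Q` it is `σ (Q ^ (n - 1))`. -/
noncomputable def geo (Q : 𝔽) (n : ℕ) : 𝔽 := ∑ i ∈ Finset.range n, Q ^ i

lemma sigma_prime_pow {Q : 𝔽} (hQ : Irreducible Q) (n : ℕ) : sigma (Q ^ n) = geo Q (n + 1) := by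
  classical
  have hinj : Function.Injective (fun i : ℕ => Q ^ i) := by
    intro i j hij
    have h := congrArg natDegree hij
    simp only [natDegree_pow] at h
    exact Nat.eq_of_mul_eq_mul_right hQ.natDegree_pos h
  rw [sigma_eq_sum ((Finset.range (n + 1)).image (fun i => Q ^ i)), geo,
    Finset.sum_image (fun i _ j _ h => hinj h)]
  intro D
  simp only [Finset.mem_image, Finset.mem_range, Nat.lt_succ_iff]
  rw [dvd_prime_pow hQ.prime]
  constructor
  · rintro ⟨i, hi, rfl⟩
    exact ⟨i, hi, Associated.refl _⟩
  · rintro ⟨i, hi, h⟩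
    exact ⟨i, hi, (eq_of_associated h).symm⟩

lemma sigma_irreducible {Q : 𝔽} (hQ : Irreducible Q) : sigma Q = Q + 1 := by
  have h := sigma_prime_pow hQ 1
  rw [pow_one] at h
  rw [h, geo]
  simp [Finset.sum_range_succ, add_comm]

lemma sigma_one : sigma 1 = 1 := by
  have h := sigma_prime_pow (irreducible_X (R := ZMod 2)) 0
  simpa [geo] using h

/-! ### Geometric sums in characteristic two -/

lemma geo_succ (Q : 𝔽) (n : ℕ) : geo Q (n + 1) = geo Q n + Q ^ n := Finset.sum_range_succ _ _

lemma geo_mul (Q : 𝔽) (n : ℕ) : geo Q n * (Q + 1) = Q ^ n + 1 := by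
  have h := geom_sum_mul Q n
  rw [CharTwo.sub_eq_add, CharTwo.sub_eq_add] at h
  exact h

/-- Modulo squares, `σ (Q ^ (2h)) + 1` is `Q (Q + 1)`. -/
lemma geo_odd_add_one (Q : 𝔽) (n : ℕ) :
    geo Q (2 * n + 1) + 1 = Q * (Q + 1) * geo Q n ^ 2 := by
  induction n with
  | zero => simp [geo, CharTwo.add_self_eq_zero]
  | succ n ih =>
    rw [show 2 * (n + 1) + 1 = (2 * n + 1) + 1 + 1 by ring, geo_succ, geo_succ, geo_succ Q n]
    linear_combination ih - (Q * (Q + 1) * geo Q n * Q ^ n) * two_eq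

lemma natDegree_geo {Q : 𝔽} (hQ : Q.natDegree ≠ 0) (n : ℕ) :
    (geo Q (n + 1)).natDegree = n * Q.natDegree := by
  have hQ1 : (Q + 1).natDegree = Q.natDegree := by
    rw [← C_1, natDegree_add_C]
  have h := congrArg natDegree (geo_mul Q (n + 1))
  have h0 : geo Q (n + 1) ≠ 0 := by
    intro h0
    rw [h0, zero_mul, ← C_1, natDegree_add_C, natDegree_pow, natDegree_zero] at h
    exact hQ (by nlinarith)
  have h1 : Q + 1 ≠ 0 := by
    intro h1
    rw [h1, natDegree_zero] at hQ1
    exact hQ hQ1.symm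
  rw [natDegree_mul h0 h1, hQ1, ← C_1, natDegree_add_C, natDegree_pow] at h
  linarith

/-- `σ (Q ^ n)` is not a unit for irreducible `Q` and `n > 0`. -/
lemma not_isUnit_geo {Q : 𝔽} (hQ : Irreducible Q) {n : ℕ} (hn : n ≠ 0) :
    ¬ IsUnit (geo Q (n + 1)) := by
  intro h
  have h1 := natDegree_geo hQ.natDegree_pos.ne' n
  rw [eq_one_of_isUnit h, natDegree_one] at h1
  exact (Nat.mul_pos (Nat.pos_of_ne_zero hn) hQ.natDegree_pos).ne h1

/-- The automorphism `X ↦ X + 1` of `F₂[X]`, which exchanges the two linear polynomials. -/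
noncomputable def shift : 𝔽 ≃ₐ[ZMod 2] 𝔽 := algEquivAevalXAddC 1

lemma shift_X : shift X = X + 1 := by simp [shift, algEquivAevalXAddC]

lemma shift_X_add_one : shift (X + 1) = X := by
  rw [map_add, shift_X, map_one, add_assoc, CharTwo.add_self_eq_zero, add_zero]

lemma shift_geo (Q : 𝔽) (n : ℕ) : shift (geo Q n) = geo (shift Q) n := by
  simp [geo]

lemma irreducible_X_add_one : Irreducible (X + 1 : 𝔽) := by
  rw [← shift_X]
  exact (MulEquiv.irreducible_iff shift).2 irreducible_X

/-! ### Prime values of `σ (X ^ (2a))` -/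

/-- If the only prime factors of `σ (X ^ (a - 1))` are linear, it is a power of `X + 1`, because its
constant term is `1`; comparing degrees then turns `σ (X ^ (a - 1)) (X + 1) = X ^ a + 1` into the
stated identity. -/
lemma geo_eq_pow {a N : ℕ} (ha : a ≠ 0) (h : geo X a ∣ (X * (X + 1) : 𝔽) ^ N) :
    (X + 1 : 𝔽) ^ a = X ^ a + 1 := by
  have hcop : IsCoprime (geo X a) (X ^ N : 𝔽) := by
    apply IsCoprime.pow_right
    rw [isCoprime_comm, irreducible_X.coprime_iff_not_dvd, X_dvd_iff, coeff_zero_eq_eval_zero]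
    obtain ⟨b, rfl⟩ := Nat.exists_eq_succ_of_ne_zero ha
    simp [geo, eval_finsetSum, Finset.sum_range_succ']
  rw [mul_pow] at h
  obtain ⟨t, -, ht⟩ := (dvd_prime_pow irreducible_X_add_one.prime N).1
    (hcop.dvd_of_dvd_mul_left h)
  have hg := geo_mul X a
  rw [eq_of_associated ht, ← pow_succ] at hg
  have hd := congrArg natDegree hg
  rw [natDegree_pow, ← C_1, natDegree_X_add_C, natDegree_X_pow_add_C, mul_one] at hd
  rw [← hg, hd]

lemma eq_two_pow_of_add_pow {a : ℕ} (ha : a ≠ 0) (h : (X + 1 : 𝔽) ^ a = X ^ a + 1) :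
    ∃ k, a = 2 ^ k := by
  obtain ⟨k, u, hu, rfl⟩ := Nat.exists_eq_two_pow_mul_odd ha
  -- `k` Frobenius maps can be cancelled, which leaves the odd exponent `u`
  have h1 : ((X + 1 : 𝔽) ^ u) ^ 2 ^ k = (X ^ u + 1) ^ 2 ^ k := by
    rw [add_pow_char_pow, one_pow, ← pow_mul, ← pow_mul, mul_comm u, h]
  have h2 : (X + 1 : 𝔽) ^ u = X ^ u + 1 := iterateFrobenius_inj 𝔽 2 k h1
  have h3 := congrArg (fun f => coeff f 1) h2
  have h4 : ((u : ℕ) : ZMod 2) = 1 := (ZMod.natCast_eq_one_iff_odd).2 hu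
  simp only [coeff_X_add_one_pow, Nat.choose_one_right, coeff_add, coeff_X_pow, coeff_one, h4] at h3
  refine ⟨k, ?_⟩
  by_cases hu1 : 1 = u
  · rw [← hu1, mul_one]
  · simp [hu1] at h3

/-- For `a = 2 ^ k` the polynomial `σ (X ^ (2a))` divides `X ^ (4a²) - X`, so its prime factors
have degree dividing `2 (k + 1)`; it is therefore composite as soon as `k > 1`. -/
lemma le_one_of_irreducible {k : ℕ} (h : Irreducible (geo X (2 * 2 ^ k + 1) : 𝔽)) : k ≤ 1 := by
  have hdvd : (geo X (2 * 2 ^ k + 1) : 𝔽) ∣ X ^ (Nat.card (ZMod 2)) ^ (2 * (k + 1)) - X := by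
    have h1 : (2 ^ (2 * (k + 1)) : ℕ) = (2 * 2 ^ k + 1) * (2 * 2 ^ k - 1) + 1 := by
      have h2 : (2 * 2 ^ k + 1) * (2 * 2 ^ k - 1) = (2 * 2 ^ k) ^ 2 - 1 ^ 2 := (Nat.sq_sub_sq _ _).symm
      have h3 : 1 ≤ (2 * 2 ^ k) ^ 2 := Nat.one_le_pow _ _ (by positivity)
      rw [h2, one_pow, Nat.sub_add_cancel h3, ← pow_succ', ← pow_mul, mul_comm]
    have h4 : (X ^ (2 * 2 ^ k + 1) + 1 : 𝔽) ∣ X ^ ((2 * 2 ^ k + 1) * (2 * 2 ^ k - 1)) - 1 := by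
      rw [← CharTwo.sub_eq_add, pow_mul]
      exact sub_one_dvd_pow_sub_one _ _
    rw [Nat.card_zmod, h1, pow_succ, ← sub_one_mul]
    exact ((Dvd.intro _ (geo_mul X _)).trans h4).mul_right X
  have h5 := h.natDegree_dvd_of_dvd_X_pow_card_pow_sub_X hdvd
  rw [natDegree_geo (by simp), natDegree_X, mul_one] at h5
  have h6 := Nat.le_of_dvd (by omega) h5
  by_contra hk
  obtain ⟨m, rfl⟩ : ∃ m, k = m + 2 := ⟨k - 2, by omega⟩
  have h7 : m < 2 ^ m := Nat.lt_two_pow_self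
  rw [pow_add] at h6
  omega

/-- A prime `P = σ (X ^ (2a))` such that `P + 1` is a product of linear factors is `σ (X ^ 2)` or
`σ (X ^ 4)`: the factor `σ (X ^ (a - 1))` of `P + 1` forces `a` to be a power of two. -/
lemma prime_sum_cases {a N : ℕ} (ha : a ≠ 0) (h : Irreducible (geo X (2 * a + 1) : 𝔽))
    (hd : geo X (2 * a + 1) + 1 ∣ (X * (X + 1) : 𝔽) ^ N) :
    a = 1 ∧ (geo X (2 * a + 1) + 1 : 𝔽) = X * (X + 1) ∨
    a = 2 ∧ (geo X (2 * a + 1) + 1 : 𝔽) = X * (X + 1) ^ 3 := by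
  have h1 : geo X a ∣ (X * (X + 1) : 𝔽) ^ N := by
    refine dvd_trans ?_ hd
    rw [geo_odd_add_one]
    exact Dvd.intro_left _ (by rw [sq, ← mul_assoc])
  obtain ⟨k, rfl⟩ := eq_two_pow_of_add_pow ha (geo_eq_pow ha h1)
  have hk := le_one_of_irreducible h
  rw [geo_odd_add_one]
  interval_cases k
  · left; simp [geo]
  · right; simp [geo, Finset.sum_range_succ]; ring

lemma prime_sum_cases_shift {b N : ℕ} (hb : b ≠ 0)
    (h : Irreducible (geo (X + 1) (2 * b + 1) : 𝔽))
    (hd : geo (X + 1) (2 * b + 1) + 1 ∣ (X * (X + 1) : 𝔽) ^ N) :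
    b = 1 ∧ (geo (X + 1) (2 * b + 1) + 1 : 𝔽) = X * (X + 1) ∨
    b = 2 ∧ (geo (X + 1) (2 * b + 1) + 1 : 𝔽) = X ^ 3 * (X + 1) := by
  have hg : shift (geo (X + 1) (2 * b + 1)) = geo X (2 * b + 1) := by
    rw [shift_geo, shift_X_add_one]
  have hg' : geo (X + 1) (2 * b + 1) = shift (geo X (2 * b + 1)) := by
    rw [shift_geo, shift_X]
  have hd' := map_dvd shift hd
  rw [map_add, hg, map_one, map_pow, map_mul, shift_X, shift_X_add_one, mul_comm (X + 1)] at hd'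
  have hi : Irreducible (geo X (2 * b + 1) : 𝔽) := by
    rw [← hg]
    exact (MulEquiv.irreducible_iff shift).2 h
  rcases prime_sum_cases hb hi hd' with ⟨h1, h2⟩ | ⟨h1, h2⟩
  · refine Or.inl ⟨h1, ?_⟩
    have h3 := congrArg shift h2
    rw [map_add, map_one, ← hg', map_mul, shift_X, shift_X_add_one] at h3
    rw [h3, mul_comm]
  · refine Or.inr ⟨h1, ?_⟩
    have h3 := congrArg shift h2
    rw [map_add, map_one, ← hg', map_mul, map_pow, shift_X, shift_X_add_one] at h3
    rw [h3, mul_comm]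

/-! ### Products of linear polynomials -/

lemma linear_pow_unique {i j k l : ℕ} (h : (X : 𝔽) ^ i * (X + 1) ^ j = X ^ k * (X + 1) ^ l) :
    i = k ∧ j = l := by
  have hle : ∀ {i j k l : ℕ}, (X : 𝔽) ^ i * (X + 1) ^ j = X ^ k * (X + 1) ^ l → k ≤ i := by
    intro i j k l h
    by_contra hlt
    obtain ⟨m, rfl⟩ : ∃ m, k = i + (m + 1) := ⟨k - i - 1, by omega⟩
    rw [pow_add, mul_assoc] at h
    have h1 := congrArg (eval 0) (mul_left_cancel₀ (pow_ne_zero i X_ne_zero) h)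
    simp at h1
  have hik : i = k := le_antisymm (hle h.symm) (hle h)
  subst hik
  have h1 := congrArg natDegree (mul_left_cancel₀ (pow_ne_zero i X_ne_zero) h)
  rw [natDegree_pow, natDegree_pow, ← C_1, natDegree_X_add_C, mul_one, mul_one] at h1
  exact ⟨rfl, h1⟩

lemma eq_linear_pow_of_dvd {f : 𝔽} {N : ℕ} (h : f ∣ (X * (X + 1)) ^ N) :
    ∃ i j, f = X ^ i * (X + 1) ^ j := by
  rw [mul_pow] at h
  obtain ⟨u, v, hu, hv, rfl⟩ := exists_dvd_and_dvd_of_dvd_mul h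
  obtain ⟨i, -, hi⟩ := (dvd_prime_pow irreducible_X.prime N).1 hu
  obtain ⟨j, -, hj⟩ := (dvd_prime_pow irreducible_X_add_one.prime N).1 hv
  exact ⟨i, j, by rw [eq_of_associated hi, eq_of_associated hj]⟩

/-- Oddness of `p` makes `p + 1` vanish at `0` and at `1`, so both exponents are positive. -/
lemma linear_pow_of_odd {p : 𝔽} {N : ℕ} (hp : IsOdd p) (h : p + 1 ∣ (X * (X + 1)) ^ N) :
    ∃ i j, i ≠ 0 ∧ j ≠ 0 ∧ p + 1 = X ^ i * (X + 1) ^ j := by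
  obtain ⟨i, j, hij⟩ := eq_linear_pow_of_dvd h
  have h2 : (1 + 1 : ZMod 2) = 0 := by decide
  refine ⟨i, j, ?_, ?_, hij⟩
  · rintro rfl
    have h1 := congrArg (eval 0) hij
    simp [hp.1, h2] at h1
  · rintro rfl
    have h1 := congrArg (eval 1) hij
    simp [hp.2, h2] at h1

/-! ### Parity of multiplicities -/

/-- The two sides would contain the prime `p` with multiplicities of different parity. -/
lemma odd_multiplicity_contra {p u v S T : 𝔽} (hp : Irreducible p) (hu : ¬ p ∣ u) (hv : ¬ p ∣ v)
    (hR : v * T ^ 2 ≠ 0) (h : p * u * S ^ 2 = v * T ^ 2) : False := by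
  have hT : T ≠ 0 := by
    rintro rfl
    simp at hR
  have hL : p * u * S ^ 2 ≠ 0 := h ▸ hR
  have hS : S ≠ 0 := by
    rintro rfl
    simp at hL
  have fin : ∀ {f : 𝔽}, f ≠ 0 → FiniteMultiplicity p f := fun hf =>
    FiniteMultiplicity.of_prime_left hp.prime hf
  have h1 := congrArg (multiplicity p) h
  rw [multiplicity_mul hp.prime (fin hL), multiplicity_mul hp.prime (fin (left_ne_zero_of_mul hL)),
    multiplicity_mul hp.prime (fin hR), (fin hS).multiplicity_pow hp.prime,
    (fin hT).multiplicity_pow hp.prime, multiplicity_eq_zero.2 hu, multiplicity_eq_zero.2 hv,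
    multiplicity_self] at h1
  omega

lemma not_dvd_add_one {p : 𝔽} (hp : Irreducible p) : ¬ p ∣ p + 1 := fun h =>
  hp.not_isUnit (isUnit_of_dvd_one ((dvd_add_right dvd_rfl).1 h))

/-- The classes of `σ (X ^ (2a)) + 1` and `σ ((X + 1) ^ (2b)) + 1` modulo squares coincide. -/
lemma linear_sums_mul (a b : ℕ) :
    (geo X (2 * a + 1) + 1 : 𝔽) * (geo (X + 1) (2 * b + 1) + 1) =
      (X * (X + 1) * geo X a * geo (X + 1) b) ^ 2 := by
  have h : (X + 1 + 1 : 𝔽) = X := by rw [add_assoc, CharTwo.add_self_eq_zero, add_zero]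
  rw [geo_odd_add_one, geo_odd_add_one, h]
  ring

/-! ### Coprime factorizations -/

lemma coprime_of_ne {p q : 𝔽} (hp : Irreducible p) (hq : Irreducible q) (h : p ≠ q) :
    IsCoprime p q :=
  hp.coprime_iff_not_dvd.2 fun hd => h (eq_of_associated (hp.associated_of_dvd hq hd))

/-- Splitting off the full power of a prime `Q` from `D`, together with its effect on `σ (D ^ 2)`;
the exponent `c` may be zero. -/
lemma factor_out {D Q : 𝔽} (hD : D ≠ 0) (hQ : Irreducible Q) :
    ∃ c E, D = Q ^ c * E ∧ ¬ Q ∣ E ∧ E ≠ 0 ∧ (Q ∣ D → c ≠ 0) ∧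
      sigma (D ^ 2) = geo Q (2 * c + 1) * sigma (E ^ 2) := by
  obtain ⟨E, h1, h2⟩ :=
    (FiniteMultiplicity.of_prime_left hQ.prime hD).exists_eq_pow_mul_and_not_dvd
  set c := multiplicity Q D
  have hE : E ≠ 0 := by
    rintro rfl
    exact h2 (dvd_zero Q)
  refine ⟨c, E, h1, h2, hE, ?_, ?_⟩
  · intro h h0
    rw [h1, h0, pow_zero, one_mul] at h
    exact h2 h
  · rw [h1, mul_pow, sigma_mul (pow_ne_zero _ (pow_ne_zero _ hQ.ne_zero)) (pow_ne_zero _ hE)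
      ((hQ.coprime_iff_not_dvd.2 h2).pow_left.pow), ← pow_mul, mul_comm c, sigma_prime_pow hQ]

lemma eq_one_of_isUnit_sigma_sq {D : 𝔽} (hD : D ≠ 0) (h : IsUnit (sigma (D ^ 2))) : D = 1 := by
  by_contra h1
  obtain ⟨Q, hQ, hQD⟩ := WfDvdMonoid.exists_irreducible_factor
    (fun hu => h1 (eq_one_of_isUnit hu)) hD
  obtain ⟨c, E, -, -, -, hc, hs⟩ := factor_out hD hQ
  rw [hs] at h
  exact not_isUnit_geo hQ (mul_ne_zero two_ne_zero (hc hQD)) (isUnit_of_mul_isUnit_left h)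

/-- A divisor of a product of primes is a subproduct, the only unit of `F₂[X]` being `1`. -/
lemma exists_eq_add_of_dvd_prod (M : Multiset 𝔽) :
    (∀ p ∈ M, Irreducible p) → ∀ f : 𝔽, f ∣ M.prod →
      ∃ N K : Multiset 𝔽, M = N + K ∧ f = N.prod := by
  induction M using Multiset.induction_on with
  | empty =>
    intro _ f h
    exact ⟨0, 0, by simp, by simpa using eq_one_of_isUnit (isUnit_of_dvd_one (by simpa using h))⟩
  | cons p M ih =>
    intro hM f h
    have hp := hM p (Multiset.mem_cons_self p M)
    have hM' : ∀ q ∈ M, Irreducible q := fun q hq => hM q (Multiset.mem_cons_of_mem hq)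
    rw [Multiset.prod_cons] at h
    by_cases hpf : p ∣ f
    · obtain ⟨g, rfl⟩ := hpf
      obtain ⟨N, K, h1, h2⟩ := ih hM' g ((mul_dvd_mul_iff_left hp.ne_zero).1 h)
      exact ⟨p ::ₘ N, K, by rw [h1, Multiset.cons_add], by rw [h2, Multiset.prod_cons]⟩
    · obtain ⟨N, K, h1, h2⟩ := ih hM' f
        ((hp.coprime_iff_not_dvd.2 hpf).symm.dvd_of_dvd_mul_left h)
      exact ⟨N, p ::ₘ K, by rw [h1, Multiset.add_cons], h2⟩

lemma split_prod {M : Multiset 𝔽} (hM : ∀ p ∈ M, Irreducible p) {f g : 𝔽} (h : M.prod = f * g) :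
    ∃ N K : Multiset 𝔽, M = N + K ∧ N.prod = f ∧ K.prod = g := by
  obtain ⟨N, K, h1, h2⟩ := exists_eq_add_of_dvd_prod M hM f ⟨g, h⟩
  refine ⟨N, K, h1, h2.symm, ?_⟩
  have h0 : N.prod ≠ 0 := Multiset.prod_ne_zero fun h0 =>
    (hM 0 (h1 ▸ Multiset.mem_add.2 (Or.inl h0))).ne_zero rfl
  rw [h1, h2, Multiset.prod_add] at h
  exact mul_left_cancel₀ h0 h

lemma sigma_multiset_prod (M : Multiset 𝔽) :
    (∀ p ∈ M, Irreducible p) → M.Nodup → sigma M.prod = (M.map (· + 1)).prod := by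
  induction M using Multiset.induction_on with
  | empty => intro _ _; simpa using sigma_one
  | cons p M ih =>
    intro hM hn
    rw [Multiset.nodup_cons] at hn
    have hp := hM p (Multiset.mem_cons_self p M)
    have hM' : ∀ q ∈ M, Irreducible q := fun q hq => hM q (Multiset.mem_cons_of_mem hq)
    have hcop : IsCoprime p M.prod := by
      rw [hp.coprime_iff_not_dvd]
      intro hd
      obtain ⟨q, hq, hpq⟩ := hp.prime.exists_mem_multiset_dvd hd
      exact hn.1 (eq_of_associated (hp.associated_of_dvd (hM' q hq) hpq) ▸ hq)
    rw [Multiset.prod_cons, sigma_mul hp.ne_zero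
      (Multiset.prod_ne_zero fun h0 => (hM' 0 h0).ne_zero rfl) hcop, sigma_irreducible hp,
      ih hM' hn.2, Multiset.map_cons, Multiset.prod_cons]

/-! ### Splitting `σ (X ^ (2a))` into two primes -/

/-- Comparison of the coefficients of `X`, `X ^ 2` and `X ^ 3` in
`(1 + X ^ i (X + 1)) (1 + X ^ s (X + 1) ^ 2) = 1 + X + ⋯ + X ^ (i + s + 3)`. -/
lemma exponents_eq {i s : ℕ} (hi : i ≠ 0) (hs : s ≠ 0) (hodd : (i + s) % 2 = 1)
    (h : (geo X (i + s + 4) : 𝔽) = (X ^ i * (X + 1) ^ 1 + 1) * (X ^ s * (X + 1) ^ 2 + 1)) :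
    i + s = 3 := by
  have hexp : (geo X (i + s + 4) : 𝔽) = 1 + X ^ i + X ^ (i + 1) + X ^ s + X ^ (s + 2) +
      X ^ (i + s) + X ^ (i + s + 1) + X ^ (i + s + 2) + X ^ (i + s + 3) := by
    rw [h]
    linear_combination (X ^ (s + 1) + X ^ (i + s + 1) + X ^ (i + s + 2)) * two_eq
  have hco : ∀ n, 0 < n → n < i + s → (1 : ZMod 2) =
      (if n = i then 1 else 0) + (if n = i + 1 then 1 else 0) + (if n = s then 1 else 0) +
        (if n = s + 2 then 1 else 0) := by
    intro n hn0 hn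
    have h1 := congrArg (fun f => coeff f n) hexp
    simp only [geo, finsetSum_coeff, coeff_add, coeff_X_pow, coeff_one] at h1
    rw [Finset.sum_ite_eq, if_pos (Finset.mem_range.2 (by omega)), if_neg (by omega : ¬ n = 0),
      if_neg (by omega : ¬ n = i + s), if_neg (by omega : ¬ n = i + s + 1),
      if_neg (by omega : ¬ n = i + s + 2), if_neg (by omega : ¬ n = i + s + 3)] at h1
    simpa using h1
  by_contra hne
  have h1 := hco 1 (by omega) (by omega)
  have h2 := hco 2 (by omega) (by omega)
  have h3 := hco 3 (by omega) (by omega)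
  by_cases hi1 : i = 1
  · rw [if_neg (by omega), if_neg (by omega), if_neg (by omega), if_neg (by omega)] at h3
    simp at h3
  · by_cases hs1 : s = 1
    · rw [if_neg (by omega), if_neg (by omega), if_neg (by omega), if_neg (by omega)] at h2
      simp at h2
    · rw [if_neg (by omega), if_neg (by omega), if_neg (by omega), if_neg (by omega)] at h1
      simp at h1

/-- If `σ ((X + 1) ^ (2b))` is prime and `σ (X ^ (2a)) = p q` with `p`, `q` odd, the equation forces
`2b` to be `2` or `4`. The exponents of `X + 1` in `p + 1` and `q + 1` are positive with sum
`2b - 1`, which leaves `1 + 2 = 3`, and the coefficients of `p q` determine the exponents of `X`. -/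
lemma three_primes {a b : ℕ} (hb : b ≠ 0) {p q : 𝔽} (hp : IsOdd p) (hq : IsOdd q)
    (hr : Irreducible (geo (X + 1) (2 * b + 1) : 𝔽)) (hpq : geo X (2 * a + 1) = p * q)
    (h : (p + 1) * (q + 1) * (geo (X + 1) (2 * b + 1) + 1) = (X ^ a * (X + 1) ^ b) ^ 2) :
    a = 3 ∧ b = 2 := by
  have hN : ((X ^ a * (X + 1) ^ b) ^ 2 : 𝔽) ∣ (X * (X + 1)) ^ (2 * a + 2 * b) := by
    rw [mul_pow, mul_pow, ← pow_mul, ← pow_mul]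
    exact mul_dvd_mul (pow_dvd_pow _ (by omega)) (pow_dvd_pow _ (by omega))
  rw [← h] at hN
  obtain ⟨i, j, hi, hj, hij⟩ := linear_pow_of_odd hp
    (((Dvd.intro _ rfl).mul_right _).trans hN : p + 1 ∣ _)
  obtain ⟨s, t, hs, ht, hst⟩ := linear_pow_of_odd hq
    (((Dvd.intro_left _ rfl).mul_right _).trans hN : q + 1 ∣ _)
  have hp' : p = X ^ i * (X + 1) ^ j + 1 := by
    rw [← hij, add_assoc, CharTwo.add_self_eq_zero, add_zero]
  have hq' : q = X ^ s * (X + 1) ^ t + 1 := by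
    rw [← hst, add_assoc, CharTwo.add_self_eq_zero, add_zero]
  rw [hij, hst] at h
  rcases prime_sum_cases_shift hb hr ((Dvd.intro_left _ rfl).trans hN) with ⟨hb', hr'⟩ | ⟨hb', hr'⟩
  · rw [hr', hb'] at h
    have h1 : (X : 𝔽) ^ (i + s + 1) * (X + 1) ^ (j + t + 1) = X ^ (2 * a) * (X + 1) ^ 2 := by
      linear_combination h
    have := linear_pow_unique h1
    omega
  · rw [hr', hb'] at h
    have h1 : (X : 𝔽) ^ (i + s + 3) * (X + 1) ^ (j + t + 1) = X ^ (2 * a) * (X + 1) ^ 4 := by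
      linear_combination h
    obtain ⟨h2, h3⟩ := linear_pow_unique h1
    have h4 : 2 * a + 1 = i + s + 4 := by omega
    rw [h4, hp', hq'] at hpq
    rcases (by omega : j = 1 ∧ t = 2 ∨ j = 2 ∧ t = 1) with ⟨rfl, rfl⟩ | ⟨rfl, rfl⟩
    · have := exponents_eq hi hs (by omega) hpq
      omega
    · rw [mul_comm, add_comm i s] at hpq
      have := exponents_eq hs hi (by omega) hpq
      omega

lemma three_primes_shift {a b : ℕ} (ha : a ≠ 0) {p q : 𝔽} (hp : IsOdd p) (hq : IsOdd q)
    (hr : Irreducible (geo X (2 * a + 1) : 𝔽)) (hpq : geo (X + 1) (2 * b + 1) = p * q)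
    (h : (geo X (2 * a + 1) + 1) * ((p + 1) * (q + 1)) = (X ^ a * (X + 1) ^ b) ^ 2) :
    a = 2 ∧ b = 3 := by
  have hodd : ∀ {f : 𝔽}, IsOdd f → IsOdd (shift f) := by
    intro f hf
    have h2 : (1 + 1 : ZMod 2) = 0 := by decide
    have hs : shift f = f.comp (X + 1) := by
      simp [shift, algEquivAevalXAddC, comp_eq_aeval]
    exact ⟨by simp [hs, eval_comp, hf.2], by simp [hs, eval_comp, h2, hf.1]⟩
  have hg : shift (geo X (2 * a + 1)) = geo (X + 1) (2 * a + 1) := by rw [shift_geo, shift_X]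
  have hi := (MulEquiv.irreducible_iff shift).2 hr
  rw [hg] at hi
  have h1 := congrArg shift hpq
  rw [shift_geo, shift_X_add_one, map_mul] at h1
  have h2 := congrArg shift h
  simp only [map_mul, map_add, map_one, map_pow, hg, shift_X] at h2
  rw [add_assoc X 1 1, CharTwo.add_self_eq_zero, add_zero] at h2
  exact (three_primes ha (hodd hp) (hodd hq) hi h1 (by linear_combination h2)).symm

/-! ### The perfect polynomials -/

/-- The perfection equation for `B ^ 2 * M.prod`, with the primes `P₁, …, P_r` collected in the
multiset `M`, forces `B = X ^ a (X + 1) ^ b` with three possibilities for `(a, b)`, and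
`M.prod = σ (B ^ 2)`. The primes are distributed over the factors `σ (X ^ (2a))` (`K₁`),
`σ ((X + 1) ^ (2b))` (`K₂`) and `σ (C ^ 2)` (`K₃`), where `C` is the part of `B` prime to `X` and
`X + 1`, and `L` holds those not dividing `σ (B ^ 2)`. -/
lemma linear_exponents {B : 𝔽} (hB0 : B ≠ 0) (hX : X ∣ B) (hX1 : X + 1 ∣ B)
    (hgcd : IsCoprime (B ^ 2) (sigma (B ^ 2))) {M : Multiset 𝔽}
    (hM : ∀ p ∈ M, Irreducible p) (hodd : ∀ p ∈ M, IsOdd p) (hn : M.Nodup) (hcard : M.card ≤ 3)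
    (heq : sigma (B ^ 2) * (M.map (· + 1)).prod = B ^ 2 * M.prod) :
    ∃ a b : ℕ, B ^ 2 * M.prod =
        (X ^ a * (X + 1) ^ b) ^ 2 * (geo X (2 * a + 1) * geo (X + 1) (2 * b + 1)) ∧
      (a = 2 ∧ b = 2 ∨ a = 3 ∧ b = 2 ∨ a = 2 ∧ b = 3) := by
  have hM0 : M.prod ≠ 0 := Multiset.prod_ne_zero fun h0 => (hM 0 h0).ne_zero rfl
  obtain ⟨a, E, hBE, hXE, hE0, ha, hsE⟩ := factor_out hB0 irreducible_X
  obtain ⟨b, C, hEC, hX1C, hC0, hb, hsC⟩ := factor_out hE0 irreducible_X_add_one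
  have ha0 := ha hX
  have hb0 : b ≠ 0 := by
    apply hb
    rw [hBE] at hX1
    refine (irreducible_X_add_one.prime.dvd_or_dvd hX1).resolve_left fun hd => ?_
    have h1 := eq_of_associated (irreducible_X_add_one.associated_of_dvd irreducible_X
      (irreducible_X_add_one.prime.dvd_of_dvd_pow hd))
    simp at h1
  -- `σ (B ^ 2)` is coprime to `B ^ 2`, hence a product of some of the given primes
  obtain ⟨F, hF⟩ : sigma (B ^ 2) ∣ M.prod := hgcd.symm.dvd_of_dvd_mul_left (Dvd.intro _ heq)
  obtain ⟨N, L, rfl, hN, hL⟩ := split_prod hM hF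
  have hMN : ∀ p ∈ N, Irreducible p := fun p hp => hM p (Multiset.mem_add.2 (Or.inl hp))
  have hNs : N.prod = geo X (2 * a + 1) * (geo (X + 1) (2 * b + 1) * sigma (C ^ 2)) := by
    rw [hN, hsE, hsC]
  obtain ⟨K₁, N', rfl, h1, hN'⟩ := split_prod hMN hNs
  have hMN' : ∀ p ∈ N', Irreducible p := fun p hp => hMN p (Multiset.mem_add.2 (Or.inr hp))
  obtain ⟨K₂, K₃, rfl, h2, h3⟩ := split_prod hMN' hN'
  have hcard1 : K₁.card ≠ 0 := by
    intro h0
    rw [Multiset.card_eq_zero.1 h0, Multiset.prod_zero] at h1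
    exact not_isUnit_geo irreducible_X (mul_ne_zero two_ne_zero ha0) (h1 ▸ isUnit_one)
  have hcard2 : K₂.card ≠ 0 := by
    intro h0
    rw [Multiset.card_eq_zero.1 h0, Multiset.prod_zero] at h2
    exact not_isUnit_geo irreducible_X_add_one (mul_ne_zero two_ne_zero hb0) (h2 ▸ isUnit_one)
  have heq' : (K₁.map (· + 1)).prod * (K₂.map (· + 1)).prod * (K₃.map (· + 1)).prod *
      (L.map (· + 1)).prod = (X ^ a * (X + 1) ^ b * C) ^ 2 * L.prod := by
    have h0 : sigma (B ^ 2) ≠ 0 := by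
      rw [← hN]
      exact Multiset.prod_ne_zero fun h0 => (hMN 0 h0).ne_zero rfl
    apply mul_left_cancel₀ h0
    rw [mul_assoc (X ^ a), ← hEC, ← hBE]
    rw [Multiset.prod_add, hN] at heq
    simp only [Multiset.map_add, Multiset.prod_add] at heq
    linear_combination heq
  simp only [Multiset.card_add] at hcard
  rcases (by omega : K₃.card = 1 ∧ K₁.card = 1 ∧ K₂.card = 1 ∧ L.card = 0 ∨ K₃.card = 0) with
    ⟨c3, c1, c2, cL⟩ | c3
  · exfalso
    -- a third prime divisor `Q` of `B` would occur to an odd power in a square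
    obtain ⟨p, rfl⟩ := Multiset.card_eq_one.1 c1
    obtain ⟨q, rfl⟩ := Multiset.card_eq_one.1 c2
    obtain ⟨w, rfl⟩ := Multiset.card_eq_one.1 c3
    obtain rfl := Multiset.card_eq_zero.1 cL
    simp only [Multiset.map_singleton, Multiset.prod_singleton, Multiset.map_zero,
      Multiset.prod_zero, mul_one] at h1 h2 h3 heq'
    have hw : Irreducible w := hMN' w (by simp)
    have hCu : ¬ IsUnit C := by
      intro hu
      rw [eq_one_of_isUnit hu, one_pow, sigma_one] at h3
      exact hw.not_isUnit (h3 ▸ isUnit_one)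
    obtain ⟨Q, hQ, hQC⟩ := WfDvdMonoid.exists_irreducible_factor hCu hC0
    obtain ⟨c, D, hCD, -, hD0, hc, hsD⟩ := factor_out hC0 hQ
    rw [hsD] at h3
    have hgu := not_isUnit_geo hQ (mul_ne_zero two_ne_zero (hc hQC))
    have hD1 := eq_one_of_isUnit_sigma_sq hD0 ((hw.isUnit_or_isUnit h3).resolve_left hgu)
    rw [hD1, one_pow, sigma_one, mul_one] at h3
    rw [h1, h2, h3, linear_sums_mul, geo_odd_add_one] at heq'
    refine odd_multiplicity_contra (S := X * (X + 1) * geo X a * geo (X + 1) b * geo Q c)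
      (T := X ^ a * (X + 1) ^ b * C) (v := 1) hQ (not_dvd_add_one hQ)
      (fun hd => hQ.not_isUnit (isUnit_of_dvd_one hd)) ?_ (by linear_combination heq')
    exact mul_ne_zero one_ne_zero (pow_ne_zero 2 (mul_ne_zero (mul_ne_zero
      (pow_ne_zero _ X_ne_zero) (pow_ne_zero _ irreducible_X_add_one.ne_zero)) hC0))
  · obtain rfl := Multiset.card_eq_zero.1 c3
    have hC1 : C = 1 := eq_one_of_isUnit_sigma_sq hC0 (h3 ▸ isUnit_one)
    subst hC1
    have hBX : B = X ^ a * (X + 1) ^ b := by rw [hBE, hEC, mul_one]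
    simp only [Multiset.map_zero, Multiset.prod_zero, mul_one] at heq'
    simp only [add_zero, Multiset.card_zero] at hcard hn hodd hM ⊢
    have hT : (X ^ a * (X + 1) ^ b : 𝔽) ≠ 0 := hBX ▸ hB0
    have hL0 : L = 0 := by
      rcases (by omega : L.card = 0 ∨ L.card = 1 ∧ K₁.card = 1 ∧ K₂.card = 1) with
        cL | ⟨cL, c1, c2⟩
      · exact Multiset.card_eq_zero.1 cL
      · exfalso
        -- a prime `w` not dividing `σ (B ^ 2)` would have multiplicities of different parity
        obtain ⟨p, rfl⟩ := Multiset.card_eq_one.1 c1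
        obtain ⟨q, rfl⟩ := Multiset.card_eq_one.1 c2
        obtain ⟨w, rfl⟩ := Multiset.card_eq_one.1 cL
        simp only [Multiset.map_singleton, Multiset.prod_singleton] at h1 h2 heq'
        have hw : Irreducible w := hM w (by simp)
        rw [h1, h2, linear_sums_mul] at heq'
        have hw' : w * 1 * (X ^ a * (X + 1) ^ b) ^ 2 =
            (w + 1) * (X * (X + 1) * geo X a * geo (X + 1) b) ^ 2 := by
          linear_combination -heq'
        refine odd_multiplicity_contra hw (fun hd => hw.not_isUnit (isUnit_of_dvd_one hd))
          (not_dvd_add_one hw) ?_ hw'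
        rw [← hw', mul_one]
        exact mul_ne_zero hw.ne_zero (pow_ne_zero 2 hT)
    subst hL0
    simp only [Multiset.map_zero, Multiset.prod_zero, mul_one] at heq'
    simp only [add_zero, Multiset.card_zero] at hcard hn hodd hM ⊢
    refine ⟨a, b, by rw [hBX, Multiset.prod_add, h1, h2], ?_⟩
    rcases (by omega : K₁.card = 1 ∧ K₂.card = 1 ∨ K₁.card = 2 ∧ K₂.card = 1 ∨
      K₁.card = 1 ∧ K₂.card = 2) with ⟨c1, c2⟩ | ⟨c1, c2⟩ | ⟨c1, c2⟩
    · obtain ⟨p, rfl⟩ := Multiset.card_eq_one.1 c1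
      obtain ⟨q, rfl⟩ := Multiset.card_eq_one.1 c2
      simp only [Multiset.map_singleton, Multiset.prod_singleton] at h1 h2 heq'
      have hp : Irreducible p := hM p (by simp)
      have hq : Irreducible q := hM q (by simp)
      have hpq : p ≠ q := by
        rintro rfl
        simp [Multiset.nodup_singleton] at hn
      subst h1 h2
      have hN : ((X ^ a * (X + 1) ^ b) ^ 2 : 𝔽) ∣ (X * (X + 1)) ^ (2 * a + 2 * b) := by
        rw [mul_pow, mul_pow, ← pow_mul, ← pow_mul]
        exact mul_dvd_mul (pow_dvd_pow _ (by omega)) (pow_dvd_pow _ (by omega))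
      rw [← heq'] at hN
      rcases prime_sum_cases ha0 hp ((Dvd.intro _ rfl).trans hN) with ⟨rfl, hp'⟩ | ⟨rfl, hp'⟩ <;>
      rcases prime_sum_cases_shift hb0 hq ((Dvd.intro_left _ rfl).trans hN) with
        ⟨rfl, hq'⟩ | ⟨rfl, hq'⟩
      · exact absurd (add_right_cancel (hp'.trans hq'.symm)) hpq
      · rw [hp', hq'] at heq'
        have h4 : (X : 𝔽) ^ 4 * (X + 1) ^ 2 = X ^ 2 * (X + 1) ^ 4 := by
          linear_combination heq'
        have := linear_pow_unique h4
        omega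
      · rw [hp', hq'] at heq'
        have h4 : (X : 𝔽) ^ 2 * (X + 1) ^ 4 = X ^ 4 * (X + 1) ^ 2 := by
          linear_combination heq'
        have := linear_pow_unique h4
        omega
      · exact Or.inl ⟨rfl, rfl⟩
    · obtain ⟨p, q, rfl⟩ := Multiset.card_eq_two.1 c1
      obtain ⟨w, rfl⟩ := Multiset.card_eq_one.1 c2
      simp only [Multiset.insert_eq_cons, Multiset.map_cons, Multiset.prod_cons,
        Multiset.map_singleton, Multiset.prod_singleton] at h1 h2 heq'
      have hw : Irreducible w := hM w (by simp)
      subst h2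
      exact Or.inr (Or.inl (three_primes hb0 (hodd p (by simp)) (hodd q (by simp)) hw h1.symm heq'))
    · obtain ⟨p, rfl⟩ := Multiset.card_eq_one.1 c1
      obtain ⟨q, w, rfl⟩ := Multiset.card_eq_two.1 c2
      simp only [Multiset.insert_eq_cons, Multiset.map_cons, Multiset.prod_cons,
        Multiset.map_singleton, Multiset.prod_singleton] at h1 h2 heq'
      have hp : Irreducible p := hM p (by simp)
      subst h1
      exact Or.inr (Or.inr
        (three_primes_shift ha0 (hodd q (by simp)) (hodd w (by simp)) hp h2.symm heq'))

/-- Evaluation at `0` and at `1` shows that `X` and `X + 1` divide `B` as soon as there is at least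
one odd prime factor `p`, because `p + 1` vanishes at both points. -/
lemma linear_dvd {B : 𝔽} {M : Multiset 𝔽} (hM : M ≠ 0)
    (hodd : ∀ p ∈ M, IsOdd p) {S : 𝔽} (heq : S * (M.map (· + 1)).prod = B ^ 2 * M.prod) :
    X ∣ B ∧ X + 1 ∣ B := by
  obtain ⟨p, hp⟩ := Multiset.exists_mem_of_ne_zero hM
  have h2 : (1 + 1 : ZMod 2) = 0 := by decide
  -- at `c = 0, 1` the left side vanishes through the factor `p + 1`, whereas no factor `p` does
  have hev : ∀ c : ZMod 2, (∀ q ∈ M, eval c q = 1) → eval c B = 0 := by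
    intro c hc
    have h0 : (p + 1 : 𝔽) ∣ (M.map (· + 1)).prod := Multiset.dvd_prod (Multiset.mem_map_of_mem _ hp)
    obtain ⟨R, hR⟩ := h0
    have h3 := congrArg (eval c) heq
    have h4 : eval c M.prod = 1 := by
      rw [eval_multiset_prod]
      apply Multiset.prod_eq_one
      intro y hy
      obtain ⟨q, hq, rfl⟩ := Multiset.mem_map.1 hy
      exact hc q hq
    rw [hR, eval_mul, eval_mul, eval_mul, h4, eval_add, hc p hp, eval_one, h2, zero_mul, mul_zero,
      mul_one, eval_pow] at h3
    exact pow_eq_zero_iff two_ne_zero |>.1 h3.symm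
  have hX1 : (X + 1 : 𝔽) = X - C 1 := by rw [C_1, CharTwo.sub_eq_add]
  rw [X_dvd_iff, coeff_zero_eq_eval_zero, hX1, dvd_iff_isRoot]
  exact ⟨hev 0 fun q hq => (hodd q hq).1, hev 1 fun q hq => (hodd q hq).2⟩

/-- Theorem 1 (main theorem): if `B` is even with `gcd(B², σ(B²)) = 1`, and
`P₁, …, P_r` (`1 ≤ r ≤ 3`) are pairwise distinct odd irreducible polynomials not
dividing `B`, then `A = B² ⬝ P₁ ⋯ P_r` perfect forces `A` to be one of five
sporadic perfect polynomials. -/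
theorem statement0 (B : Polynomial (ZMod 2)) (hB : IsEven B)
    (hgcd : IsCoprime (B ^ 2) (sigma (B ^ 2)))
    (r : ℕ) (hr1 : 1 ≤ r) (hr3 : r ≤ 3)
    (P : Fin r → Polynomial (ZMod 2))
    (hirr : ∀ i, Irreducible (P i))
    (hodd : ∀ i, IsOdd (P i))
    (hndvd : ∀ i, ¬ P i ∣ B)
    (hdist : Function.Injective P)
    (A : Polynomial (ZMod 2)) (hA : A = B ^ 2 * ∏ i, P i)
    (hperf : sigma A = A) :
    A = X * (X + 1) ^ 2 * (X ^ 2 + X + 1) ∨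
    A = X ^ 2 * (X + 1) * (X ^ 2 + X + 1) ∨
    A = X ^ 4 * (X + 1) ^ 4 * (X ^ 4 + X ^ 3 + 1) * (X ^ 4 + X ^ 3 + X ^ 2 + X + 1) ∨
    A = X ^ 4 * (X + 1) ^ 6 * (X ^ 3 + X + 1) * (X ^ 3 + X ^ 2 + 1) *
          (X ^ 4 + X ^ 3 + X ^ 2 + X + 1) ∨
    A = X ^ 6 * (X + 1) ^ 4 * (X ^ 3 + X + 1) * (X ^ 3 + X ^ 2 + 1) *
          (X ^ 4 + X ^ 3 + 1) := by
  classical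
  have hB0 : B ≠ 0 := by
    rintro rfl
    rw [zero_pow two_ne_zero, isCoprime_zero_left] at hgcd
    have h0 : sigma (0 : 𝔽) = 0 := by
      have h : ∏ i, P i ≠ 0 := Finset.prod_ne_zero_iff.2 fun i _ => (hirr i).ne_zero
      rw [hA, zero_pow two_ne_zero, zero_mul] at hperf
      exact hperf
    rw [h0] at hgcd
    exact not_isUnit_zero hgcd
  let M : Multiset 𝔽 := Finset.univ.val.map P
  have hMP : M.prod = ∏ i, P i := rfl
  have hmem : ∀ p ∈ M, ∃ i, P i = p := by
    intro p hp
    obtain ⟨i, -, hi⟩ := Multiset.mem_map.1 hp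
    exact ⟨i, hi⟩
  have hM : ∀ p ∈ M, Irreducible p := by
    intro p hp
    obtain ⟨i, rfl⟩ := hmem p hp
    exact hirr i
  have hModd : ∀ p ∈ M, IsOdd p := by
    intro p hp
    obtain ⟨i, rfl⟩ := hmem p hp
    exact hodd i
  have hn : M.Nodup := Multiset.Nodup.map hdist Finset.univ.nodup
  have hcardr : M.card = r := by simp [M]
  have hM0 : M ≠ 0 := by
    intro h0
    rw [h0, Multiset.card_zero] at hcardr
    omega
  have hcop : IsCoprime (B ^ 2) M.prod := by
    rw [hMP]
    exact IsCoprime.prod_right fun i _ =>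
      ((hirr i).coprime_iff_not_dvd.2 (hndvd i)).symm.pow_left
  have hMprod : M.prod ≠ 0 := Multiset.prod_ne_zero fun h0 => (hM 0 h0).ne_zero rfl
  have heq : sigma (B ^ 2) * (M.map (· + 1)).prod = B ^ 2 * M.prod := by
    rw [← sigma_multiset_prod M hM hn, ← sigma_mul (pow_ne_zero 2 hB0) hMprod hcop, hMP, ← hA, hperf]
  obtain ⟨hX, hX1⟩ := linear_dvd hM0 hModd heq
  obtain ⟨a, b, hab, h⟩ := linear_exponents hB0 hX hX1 hgcd hM hModd hn (by omega) heq
  rw [hA, ← hMP, hab]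
  have e4 : (geo X 5 : 𝔽) = X ^ 4 + X ^ 3 + X ^ 2 + X + 1 := by
    simp only [geo, Finset.sum_range_succ, Finset.sum_range_zero]
    ring
  have e4' : (geo (X + 1) 5 : 𝔽) = X ^ 4 + X ^ 3 + 1 := by
    simp only [geo, Finset.sum_range_succ, Finset.sum_range_zero]
    linear_combination (2 * X ^ 3 + 5 * X ^ 2 + 5 * X + 2) * two_eq
  have e6 : (geo X 7 : 𝔽) = (X ^ 3 + X + 1) * (X ^ 3 + X ^ 2 + 1) := by
    simp only [geo, Finset.sum_range_succ, Finset.sum_range_zero]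
    linear_combination (-X ^ 3) * two_eq
  have e6' : (geo (X + 1) 7 : 𝔽) = (X ^ 3 + X + 1) * (X ^ 3 + X ^ 2 + 1) := by
    simp only [geo, Finset.sum_range_succ, Finset.sum_range_zero]
    linear_combination (3 * X ^ 5 + 10 * X ^ 4 + 16 * X ^ 3 + 17 * X ^ 2 + 10 * X + 3) * two_eq
  rcases h with ⟨rfl, rfl⟩ | ⟨rfl, rfl⟩ | ⟨rfl, rfl⟩
  · refine Or.inr (Or.inr (Or.inl ?_))
    rw [e4, e4']
    ring
  · refine Or.inr (Or.inr (Or.inr (Or.inr ?_)))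
    rw [e6, e4']
    ring
  · refine Or.inr (Or.inr (Or.inr (Or.inl ?_)))
    rw [e4, e6']
    ring
end

section
/- For every non-negative integer n, the polynomial T(n) := (x(x+1))^{2ⁿ−1} ∈ F₂[x] is perfect, i.e., σ(T(n)) = T(n). -/
/-!
The factors `x` and `x + 1` are coprime primes and `F₂[x]` has only the unit `1`, so every divisor
of `(x(x+1))^m` is uniquely `x^i (x+1)^j` with `i, j ≤ m`. Hence
`σ((x(x+1))^m) = (∑_{i ≤ m} x^i) (∑_{j ≤ m} (x+1)^j)`. For `m = 2ⁿ - 1`, Frobenius gives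
`(y - 1) ∑_{i < 2ⁿ} y^i = y^{2ⁿ} - 1 = (y - 1)^{2ⁿ}`, so each geometric sum equals
`(y + 1)^{2ⁿ - 1}`. Since `(x + 1) + 1 = x`, the two factors are swapped and the product is
unchanged.
-/

open Polynomial

/-- The only unit of `F₂[x]` is `1`, so associated polynomials coincide. -/
lemma eq_of_associated_s8 {a b : Polynomial (ZMod 2)} (h : Associated a b) : a = b := by
  obtain ⟨u, rfl⟩ := h
  obtain ⟨r, hr, hu⟩ := Polynomial.isUnit_iff.mp u.isUnit
  have hr1 : r = 1 := by
    have : ∀ r : ZMod 2, r ≠ 0 → r = 1 := by decide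
    exact this r hr.ne_zero
  rw [← hu, hr1, C_1, mul_one]

lemma prime_X_add_one : Prime (X + 1 : Polynomial (ZMod 2)) := by
  simpa [CharTwo.sub_eq_add] using Polynomial.prime_X_sub_C (1 : ZMod 2)

lemma isCoprime_X_X_add_one : IsCoprime (X : Polynomial (ZMod 2)) (X + 1) :=
  ⟨-1, 1, by ring⟩

lemma exponents_le_of_dvd {i j k l : ℕ}
    (h : (X ^ i * (X + 1) ^ j : Polynomial (ZMod 2)) ∣ X ^ k * (X + 1) ^ l) :
    i ≤ k ∧ j ≤ l := by
  have hX : Prime (X : Polynomial (ZMod 2)) := Polynomial.prime_X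
  have hY := prime_X_add_one
  constructor
  · exact (pow_dvd_pow_iff hX.ne_zero hX.not_isUnit).mp
      ((isCoprime_X_X_add_one.pow).dvd_of_dvd_mul_right (dvd_of_mul_right_dvd h))
  · exact (pow_dvd_pow_iff hY.ne_zero hY.not_isUnit).mp
      ((isCoprime_X_X_add_one.symm.pow).dvd_of_dvd_mul_left (dvd_of_mul_left_dvd h))

lemma dvd_iff_exists_exponents (m : ℕ) (D : Polynomial (ZMod 2)) :
    D ∣ (X * (X + 1)) ^ m ↔ ∃ i ≤ m, ∃ j ≤ m, D = X ^ i * (X + 1) ^ j := by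
  rw [mul_pow]
  constructor
  · intro h
    obtain ⟨a, b, ha, hb, rfl⟩ := exists_dvd_and_dvd_of_dvd_mul h
    obtain ⟨i, hi, hai⟩ := (dvd_prime_pow Polynomial.prime_X m).mp ha
    obtain ⟨j, hj, hbj⟩ := (dvd_prime_pow prime_X_add_one m).mp hb
    exact ⟨i, hi, j, hj, by rw [eq_of_associated_s8 hai, eq_of_associated_s8 hbj]⟩
  · rintro ⟨i, hi, j, hj, rfl⟩
    exact mul_dvd_mul (pow_dvd_pow _ hi) (pow_dvd_pow _ hj)

lemma sigma_pow_eq (m : ℕ) :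
    sigma ((X * (X + 1)) ^ m) =
      (∑ i ∈ Finset.range (m + 1), X ^ i) * ∑ j ∈ Finset.range (m + 1), (X + 1) ^ j := by
  classical
  let f : ℕ × ℕ → Polynomial (ZMod 2) := fun p => X ^ p.1 * (X + 1) ^ p.2
  have hf : Function.Injective f := by
    rintro ⟨i, j⟩ ⟨k, l⟩ (h : (X ^ i * (X + 1) ^ j : Polynomial (ZMod 2)) = X ^ k * (X + 1) ^ l)
    have h1 := exponents_le_of_dvd h.dvd
    have h2 := exponents_le_of_dvd h.symm.dvd
    exact Prod.ext (le_antisymm h1.1 h2.1) (le_antisymm h1.2 h2.2)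
  have hs : {D : Polynomial (ZMod 2) | D ∣ (X * (X + 1)) ^ m} =
      ((Finset.range (m + 1) ×ˢ Finset.range (m + 1)).image f : Finset _) := by
    ext D
    simp only [Set.mem_ofPred_eq, dvd_iff_exists_exponents, Finset.coe_image, Set.mem_image,
      Finset.mem_coe, Finset.mem_product, Finset.mem_range, Nat.lt_succ_iff, Prod.exists, f]
    constructor
    · rintro ⟨i, hi, j, hj, rfl⟩
      exact ⟨i, j, ⟨hi, hj⟩, rfl⟩
    · rintro ⟨i, j, ⟨hi, hj⟩, rfl⟩
      exact ⟨i, hi, j, hj, rfl⟩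
  change ∑ᶠ D ∈ {D : Polynomial (ZMod 2) | D ∣ (X * (X + 1)) ^ m}, D = _
  rw [hs, finsum_mem_coe_finset, Finset.sum_image hf.injOn, Finset.sum_mul_sum,
    Finset.sum_product]

/-- Frobenius turns `y ^ 2ⁿ - 1` into `(y - 1) ^ 2ⁿ`; one factor `y - 1 = y + 1` cancels. -/
lemma geom_sum_two_pow (n : ℕ) (y : Polynomial (ZMod 2)) (hy : y + 1 ≠ 0) :
    ∑ i ∈ Finset.range (2 ^ n), y ^ i = (y + 1) ^ (2 ^ n - 1) := by
  apply mul_right_cancel₀ hy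
  rw [← pow_succ, Nat.sub_add_cancel Nat.one_le_two_pow, add_pow_char_pow, one_pow,
    ← CharTwo.sub_eq_add y 1, geom_sum_mul, CharTwo.sub_eq_add]

/-- For every `n ≥ 0`, the trivial polynomial `T(n) = (x(x+1))^{2ⁿ−1}` is perfect. -/
theorem statement8 (n : ℕ) :
    sigma ((X * (X + 1)) ^ (2 ^ n - 1) : Polynomial (ZMod 2)) =
      (X * (X + 1)) ^ (2 ^ n - 1) := by
  have hX : (X + 1 + 1 : Polynomial (ZMod 2)) = X := by
    rw [add_assoc, CharTwo.add_self_eq_zero, add_zero]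
  rw [sigma_pow_eq, Nat.sub_add_cancel Nat.one_le_two_pow,
    geom_sum_two_pow n X prime_X_add_one.ne_zero,
    geom_sum_two_pow n (X + 1) (hX.symm ▸ X_ne_zero), hX, mul_pow, mul_comm]
end

section
/- Let A = x^{h−1} + x^{h−2} + ⋯ + x + 1 ∈ F₂[x] be a complete polynomial, and let r ≥ 0 be the exact power of (x+1) dividing A (i.e., (x+1)^r ∣ A and (x+1)^{r+1} ∤ A). Then r = 2ⁿ − 1 for some non-negative integer n, and A = (x+1)^{2ⁿ−1} · B^{2ⁿ} for some complete polynomial B ∈ F₂[x]. -/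
/-!
Write `h = 2ⁿ m` with `m` odd and `B = x^{m-1} + ⋯ + 1`. Frobenius on `F₂[x]` gives
`A (x+1) = x^h + 1 = (x^m + 1)^{2ⁿ} = (B (x+1))^{2ⁿ}`, and cancelling one factor `x+1`
yields `A = (x+1)^{2ⁿ-1} B^{2ⁿ}`. Since `B(1) = m = 1` in `F₂`, the prime `x+1` does not
divide `B`, so the exact power of `x+1` in `A` is `2ⁿ - 1`.
-/

open Polynomial

/-- A binary polynomial is complete if it equals `x^{h−1} + x^{h−2} + ⋯ + x + 1`
for some `h ≥ 1`. -/
def CompletePoly (A : Polynomial (ZMod 2)) : Prop :=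
  ∃ h : ℕ, 0 < h ∧ A = ∑ i ∈ Finset.range h, X ^ i

theorem X_add_one_eq_X_sub_C : (X + 1 : (ZMod 2)[X]) = X - C 1 := by
  rw [C_1, CharTwo.sub_eq_add]

theorem geom_sum_mul_X_add_one (h : ℕ) :
    (∑ i ∈ Finset.range h, (X : (ZMod 2)[X]) ^ i) * (X + 1) = X ^ h + 1 := by
  rw [← CharTwo.sub_eq_add (X : (ZMod 2)[X]) 1, ← CharTwo.sub_eq_add (X ^ h : (ZMod 2)[X]) 1]
  exact geom_sum_mul X h

theorem geom_sum_eq_mul_pow (n m : ℕ) :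
    (∑ i ∈ Finset.range (2 ^ n * m), (X : (ZMod 2)[X]) ^ i) =
      (X + 1) ^ (2 ^ n - 1) * (∑ i ∈ Finset.range m, X ^ i) ^ 2 ^ n := by
  have h0 : (X + 1 : (ZMod 2)[X]) ≠ 0 := X_add_one_eq_X_sub_C ▸ X_sub_C_ne_zero 1
  apply mul_right_cancel₀ h0
  rw [geom_sum_mul_X_add_one, mul_right_comm, ← pow_succ, Nat.sub_add_cancel Nat.one_le_two_pow,
    ← mul_pow, mul_comm (X + 1), geom_sum_mul_X_add_one, add_pow_char_pow, one_pow, ← pow_mul,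
    mul_comm m]

theorem not_X_add_one_dvd_geom_sum {m : ℕ} (hm : ¬ 2 ∣ m) :
    ¬ (X + 1 : (ZMod 2)[X]) ∣ ∑ i ∈ Finset.range m, X ^ i := by
  rw [X_add_one_eq_X_sub_C, dvd_iff_isRoot, IsRoot.def, eval_geom_sum]
  simpa [ZMod.natCast_eq_zero_iff] using hm

/-- Canaday's Lemma 1: if `A = x^{h−1} + ⋯ + x + 1` is complete and `(x+1)^r`
exactly divides `A`, then `r = 2ⁿ − 1` and `A = (x+1)^{2ⁿ−1} ⬝ B^{2ⁿ}` with `B`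
complete. -/
theorem statement10 (h : ℕ) (hh : 0 < h) (A : Polynomial (ZMod 2))
    (hA : A = ∑ i ∈ Finset.range h, X ^ i)
    (r : ℕ) (hr : (X + 1) ^ r ∣ A) (hr' : ¬ (X + 1) ^ (r + 1) ∣ A) :
    ∃ n : ℕ, r = 2 ^ n - 1 ∧
      ∃ B : Polynomial (ZMod 2), CompletePoly B ∧ A = (X + 1) ^ (2 ^ n - 1) * B ^ (2 ^ n) := by
  obtain ⟨n, m, hm, rfl⟩ := Nat.exists_eq_pow_mul_and_not_dvd hh.ne' 2 (by norm_num)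
  have hp : Prime (X + 1 : (ZMod 2)[X]) := X_add_one_eq_X_sub_C ▸ prime_X_sub_C 1
  rw [geom_sum_eq_mul_pow] at hA
  refine ⟨n, ?_, _, ⟨m, Nat.pos_of_ne_zero (by rintro rfl; simp at hm), rfl⟩, hA⟩
  rw [hA] at hr hr'
  rcases lt_trichotomy r (2 ^ n - 1) with hlt | heq | hgt
  · exact absurd (Dvd.dvd.mul_right (pow_dvd_pow _ hlt) _) hr'
  · exact heq
  · have hd := (pow_dvd_pow _ (Nat.succ_le_of_lt hgt)).trans hr
    rw [Nat.succ_eq_add_one, pow_succ] at hd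
    have hd' := (mul_dvd_mul_iff_left (pow_ne_zero _ hp.ne_zero)).1 hd
    exact absurd (hp.dvd_of_dvd_pow hd') (not_X_add_one_dvd_geom_sum hm)
end

section
/- If β is a positive integer such that the polynomial P = x(x+1)^β + 1 ∈ F₂[x] is both complete and irreducible, then P = x² + x + 1 or P = x⁴ + x³ + x² + x + 1. -/
/-!
Let `h` be the number of terms of `P` and `N = β + 1`. Multiplying
`1 + X + ⋯ + X ^ (h - 1) = X (X + 1) ^ β + 1` by `X + 1` and cancelling `X` gives
`(X + 1) ^ N = X ^ N + 1`. Over `F₂` this forces `N = 2 ^ n`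
(`eq_two_pow_of_X_add_one_pow_eq`): write `N = 2 ^ n * m` with `m` odd, extract the Frobenius
part, and compare the coefficients of degree one.

Thus `P` has degree `2 ^ n` and divides `X ^ (2 ^ n + 1) - 1`. As
`(2 ^ n + 1) (2 ^ n - 1) = 2 ^ (2 n) - 1`, it divides `X ^ 2 ^ (2 n) - X`. The degree of an
irreducible factor of the latter divides `2 n`, so `2 ^ n ∣ 2 n`, whence `n ≤ 2`; the cases
`n = 1` and `n = 2` are the two polynomials claimed.
-/

open Polynomial

theorem eq_two_pow_of_X_add_one_pow_eq {N : ℕ} (hN : N ≠ 0)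
    (h : (X + 1 : (ZMod 2)[X]) ^ N = X ^ N + 1) : ∃ n, N = 2 ^ n := by
  obtain ⟨n, m, hm, rfl⟩ := Nat.exists_eq_two_pow_mul_odd hN
  refine ⟨n, ?_⟩
  -- By Frobenius, both sides are polynomials in `X ^ 2 ^ n`.
  have h' : (X + 1 : (ZMod 2)[X]) ^ m = X ^ m + 1 := by
    apply expand_injective (R := ZMod 2) (pow_pos (two_pos (α := ℕ)) n)
    rw [pow_mul, add_pow_char_pow, one_pow, pow_mul] at h
    simpa using h
  have hc := congrArg (fun p => coeff p 1) h'
  simp only [coeff_X_add_one_pow, Nat.choose_one_right, coeff_add, coeff_X_pow,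
    coeff_one, one_ne_zero, if_false, add_zero] at hc
  have hm1 : m = 1 := by
    by_contra hne
    rw [if_neg (fun e => hne e.symm), ZMod.natCast_eq_zero_iff] at hc
    exact (Nat.not_even_iff_odd.mpr hm) (even_iff_two_dvd.mpr hc)
  simp [hm1]

theorem le_two_of_two_pow_dvd {n : ℕ} (hn : n ≠ 0) (h : 2 ^ n ∣ 2 * n) : n ≤ 2 := by
  have hle := Nat.le_of_dvd (by omega) h
  by_contra! hlt
  have key : ∀ k, 2 * (k + 3) < 2 ^ (k + 3) := by
    intro k
    induction k with
    | zero => norm_num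
    | succ k ih => rw [show k + 1 + 3 = (k + 3) + 1 by ring, pow_succ]; omega
  have := key (n - 3)
  rw [show n - 3 + 3 = n by omega] at this
  omega

/-- Canaday's Corollary: the only complete irreducible polynomials of the form
`x(x+1)^β + 1` are `x² + x + 1` and `x⁴ + x³ + x² + x + 1`. -/
theorem statement11 (β : ℕ) (hβ : 0 < β) (P : Polynomial (ZMod 2))
    (hP : P = X * (X + 1) ^ β + 1)
    (hcomp : CompletePoly P) (hirr : Irreducible P) :
    P = X ^ 2 + X + 1 ∨ P = X ^ 4 + X ^ 3 + X ^ 2 + X + 1 := by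
  obtain ⟨h, hh, hsum⟩ := hcomp
  have h2 : (2 : (ZMod 2)[X]) = 0 := CharTwo.two_eq_zero
  have hmon : (X + 1 : (ZMod 2)[X]).Monic := monic_X_add_C 1
  have hdeg1 : (X + 1 : (ZMod 2)[X]).natDegree = 1 := natDegree_X_add_C 1
  have hgeom : P * (X - 1) = X ^ h - 1 := hsum ▸ geom_sum_mul X h
  obtain ⟨k, rfl⟩ : ∃ k, h = k + 1 := ⟨h - 1, by omega⟩
  have hpow : (X + 1 : (ZMod 2)[X]) ^ (β + 1) = X ^ k + 1 := by
    apply mul_left_cancel₀ (X_ne_zero (R := ZMod 2))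
    rw [hP] at hgeom
    linear_combination hgeom + (X * (X + 1) ^ β - X) * h2
  have hk : k = β + 1 := by
    have hd := congrArg natDegree hpow
    rw [hmon.natDegree_pow, hdeg1, ← C_1, natDegree_X_pow_add_C] at hd
    omega
  subst hk
  have hPdeg : P.natDegree = β + 1 := by
    rw [hP, ← C_1, natDegree_add_C, C_1, natDegree_X_mul (hmon.pow β).ne_zero,
      hmon.natDegree_pow, hdeg1, mul_one]
  obtain ⟨n, hn⟩ := eq_two_pow_of_X_add_one_pow_eq β.add_one_ne_zero hpow
  have hn0 : n ≠ 0 := by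
    rintro rfl
    simp at hn
    omega
  have hdvd : P ∣ X ^ (Nat.card (ZMod 2)) ^ (2 * n) - X := by
    have hP1 : P ∣ X ^ (2 ^ n + 1) - 1 := ⟨X - 1, by rw [hgeom, hn]⟩
    have hexp : 2 ^ (2 * n) = (2 ^ n + 1) * (2 ^ n - 1) + 1 := by
      obtain ⟨c, hc⟩ : ∃ c, 2 ^ n = c + 1 := ⟨2 ^ n - 1, by have := Nat.two_pow_pos n; omega⟩
      rw [mul_comm, pow_mul, hc, Nat.add_sub_cancel]
      ring
    have hP2 : P ∣ X ^ ((2 ^ n + 1) * (2 ^ n - 1)) - 1 :=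
      hP1.trans (pow_one_sub_dvd_pow_mul_sub_one X _ _)
    rw [Nat.card_zmod, hexp, pow_succ]
    convert! hP2.mul_right X using 1
    ring
  have hdiv := hirr.natDegree_dvd_of_dvd_X_pow_card_pow_sub_X hdvd
  rw [hPdeg, hn] at hdiv
  have hn2 := le_two_of_two_pow_dvd hn0 hdiv
  have hcases : n = 1 ∨ n = 2 := by omega
  rcases hcases with rfl | rfl
  · left
    obtain rfl : β = 1 := by omega
    rw [hP]
    ring
  · right
    obtain rfl : β = 3 := by omega
    rw [hP]
    linear_combination (X ^ 3 + X ^ 2) * h2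
end

section
/- Let A ∈ F₂[x] be a complete polynomial of even degree 2m ≥ 2 such that every irreducible factor of A has the form x^α(x+1)^β + 1 for some non-negative integers α, β. Then A ∈ {x² + x + 1, x⁴ + x³ + x² + x + 1, (x³ + x + 1)(x³ + x² + 1)}. -/
/-!
Put `n = 2m + 1`, so that `A = (X^n - 1)/(X - 1)`, and let `K` be an algebraic closure of `F₂`.
By hypothesis every `n`-th root of unity `z ≠ 1` in `K` has a minimal polynomial
`X^a (X+1)^b + 1`, and so does `z⁻¹`, say `X^α (X+1)^β + 1`. The two are reciprocal to each other,
which gives, with `d = a + b = α + β`, the identity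
`X^d + (X+1)^β = 1 + X^a (X+1)^b` and its mirror image (`reciprocal_identity`).

Comparing the orders of vanishing at `0` and at `1` in these identities leaves only
`(a, b) = (2^k, 1)`, `(1, 2^k)` or `(1, 2^k - 1)` (`classification`). With `q = 2^k`, in the first
two cases `z^(q²+q+1) = 1`, so `z ∈ F_{q³}` and the degree `q + 1` divides `3k`; in the last case
`z^(q+1) = 1`, so `z ∈ F_{q²}` and the degree `q` divides `2k`. Hence `k` is tiny, and the order of
`z` divides `3`, `5`, `7` or `73`, where in the last case `z` is a root of
`(X^9+X+1)(X^9+X^8+1)` (`root_cases`).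

For a primitive `n`-th root of unity this yields `n ∈ {3, 5, 7, 73}`. The first three values are the
listed polynomials, and `n = 73` is impossible because the 72 nontrivial roots of unity would all
be roots of a polynomial of degree 18.
-/

open Polynomial

/-! ### Orders of vanishing and the possible exponents -/

lemma eq_of_X_pow_mul_eq {a q : ℕ} {U W : (ZMod 2)[X]} (hU : U.eval 0 ≠ 0) (hW : W.eval 0 ≠ 0)
    (h : X ^ a * W = X ^ q * U) : a = q := by
  rcases lt_trichotomy a q with hlt | heq | hlt
  · obtain ⟨k, rfl⟩ := Nat.exists_eq_add_of_lt hlt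
    have : W = X ^ (k + 1) * U := by
      apply mul_left_cancel₀ (pow_ne_zero a (X_ne_zero (R := ZMod 2)))
      rw [h]; ring
    simp [this] at hW
  · exact heq
  · obtain ⟨k, rfl⟩ := Nat.exists_eq_add_of_lt hlt
    have : U = X ^ (k + 1) * W := by
      apply mul_left_cancel₀ (pow_ne_zero q (X_ne_zero (R := ZMod 2)))
      rw [← h]; ring
    simp [this] at hU

/-- If `n = 2^v c` with `c` odd, then `(X+1)^n - 1` vanishes at `0` to order exactly `2^v`, since
`(X+1)^n = (1 + X^(2^v))^c`. -/
lemma exists_X_add_one_pow {n : ℕ} (hn : 0 < n) :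
    ∃ (v c : ℕ) (U : (ZMod 2)[X]), Odd c ∧ n = 2 ^ v * c ∧ U.eval 0 ≠ 0 ∧
      (X + 1) ^ n = 1 + X ^ 2 ^ v * U := by
  obtain ⟨v, c, hc, rfl⟩ := Nat.exists_eq_two_pow_mul_odd hn.ne'
  obtain ⟨k, hk⟩ := powAddExpansion (1 : (ZMod 2)[X]) (X ^ 2 ^ v) c
  refine ⟨v, c, 1 + k * X ^ 2 ^ v, hc, rfl, ?_, ?_⟩
  · simp
  · have hc1 : (c : (ZMod 2)[X]) = 1 := by
      obtain ⟨j, rfl⟩ := hc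
      have t : (2 : (ZMod 2)[X]) = 0 := CharTwo.two_eq_zero
      push_cast
      linear_combination (j : (ZMod 2)[X]) * t
    rw [pow_mul, add_pow_char_pow, one_pow, add_comm, hk, hc1]
    ring

/-- Order of vanishing at `0`: as `β < d`, the power of `X` dividing `X^d + (X+1)^β + 1` is the
exact power of two dividing `β`. -/
lemma exponent_eq_two_pow {d a b β : ℕ} (hβ : 0 < β) (hβd : β < d)
    (h : X ^ d + (X + 1) ^ β = (1 + X ^ a * (X + 1) ^ b : (ZMod 2)[X])) :
    ∃ v c : ℕ, Odd c ∧ β = 2 ^ v * c ∧ a = 2 ^ v := by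
  obtain ⟨v, c, U, hc, hn, hU, hexp⟩ := exists_X_add_one_pow hβ
  refine ⟨v, c, hc, hn, ?_⟩
  have hlt : 2 ^ v < d := lt_of_le_of_lt (by rw [hn]; exact Nat.le_mul_of_pos_right _ hc.pos) hβd
  obtain ⟨k, rfl⟩ := Nat.exists_eq_add_of_lt hlt
  refine eq_of_X_pow_mul_eq (U := U + X ^ (k + 1)) (W := (X + 1) ^ b) (by simpa using hU)
    (by simp) ?_
  rw [hexp] at h
  linear_combination -h

lemma d_eq_two_pow {d : ℕ} (hd : 0 < d) (h : (X + 1) ^ d = (1 + X ^ d : (ZMod 2)[X])) :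
    ∃ v : ℕ, d = 2 ^ v := by
  obtain ⟨v, c, U, hc, hn, hU, hexp⟩ := exists_X_add_one_pow hd
  refine ⟨v, eq_of_X_pow_mul_eq (W := 1) hU (by simp) ?_⟩
  rw [hexp] at h
  linear_combination -h

/-- Order of vanishing at `1`: for `d` odd and `β ≥ 2` the derivative of `X^d + (X+1)^β` at `1`
is `1`, so the zero of `X^d + (X+1)^β + 1` at `1` is simple. -/
lemma exponent_eq_one {d a b β : ℕ} (hd : Odd d) (hβ : 2 ≤ β) (hb : 0 < b)
    (h : X ^ d + (X + 1) ^ β = (1 + X ^ a * (X + 1) ^ b : (ZMod 2)[X])) : b = 1 := by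
  by_contra hb1
  have h2 := congrArg (fun p => (derivative p).eval 1) h
  have hd1 : (d : ZMod 2) = 1 := by
    rw [ZMod.natCast_eq_one_iff_odd]; exact hd
  have e : (1 + 1 : ZMod 2) = 0 := by decide
  have e1 : β - 1 ≠ 0 := by omega
  have e2 : b - 1 ≠ 0 := by omega
  simp [derivative_pow, hd1, e, e1, e2, hb.ne'] at h2

/-- The exponents of an irreducible `X^a (X+1)^b + 1` whose reciprocal is the irreducible
`X^α (X+1)^β + 1`, extracted from the two reciprocity identities by comparing parities. -/
lemma classification {d a b α β : ℕ} (ha : 0 < a) (hb : 0 < b) (hα : 0 < α) (hβ : 0 < β)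
    (hab : a + b = d) (hαβ : α + β = d) (hpar : ¬ (Even α ∧ Even β))
    (h1 : X ^ d + (X + 1) ^ β = (1 + X ^ a * (X + 1) ^ b : (ZMod 2)[X]))
    (h2 : X ^ d + (X + 1) ^ b = (1 + X ^ α * (X + 1) ^ β : (ZMod 2)[X])) :
    ∃ k : ℕ, (a = 2 ^ k ∧ b = 1) ∨ (a = 1 ∧ b = 2 ^ k) ∨ (a = 1 ∧ b + 1 = 2 ^ k) := by
  obtain ⟨v, c, hc, hβv, hav⟩ := exponent_eq_two_pow hβ (by omega) h1
  obtain ⟨w, e, he, hbw, hαw⟩ := exponent_eq_two_pow hb (by omega) h2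
  have odd_pow : ∀ j : ℕ, Odd (2 ^ j) → 2 ^ j = 1 := by
    intro j hj
    rcases j with _ | j
    · rfl
    · exact absurd hj (by simp [Nat.not_odd_iff_even, Nat.even_pow])
  by_cases hβo : Odd β
  · have ha1 : a = 1 := by
      rw [hav]; apply odd_pow
      rw [hβv] at hβo
      exact (Nat.odd_mul.mp hβo).1
    by_cases hαo : Odd α
    · have hα1 : α = 1 := by
        rw [hαw]; apply odd_pow; rwa [hαw] at hαo
      obtain rfl : b = β := by omega
      -- The polynomial is self-reciprocal, which forces `(X+1)^d = X^d + 1`.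
      obtain ⟨k, hk⟩ := d_eq_two_pow (d := d) (by omega) (by
        have hd : d = b + 1 := by omega
        rw [ha1] at h1
        rw [hd] at h1 ⊢
        have t : (2 : (ZMod 2)[X]) = 0 := CharTwo.two_eq_zero
        linear_combination -h1 + ((X + 1) ^ b - 1) * t)
      exact ⟨k, Or.inr (Or.inr ⟨ha1, by omega⟩)⟩
    · -- `α` even: `d` is odd, so the mirror identity gives `β = 1` and `α = b = 2^w`.
      rw [Nat.not_odd_iff_even] at hαo
      have hbe : Even b := by rw [hbw, ← hαw]; exact hαo.mul_right e
      have hdo : Odd d := by rw [← hab, ha1, add_comm]; exact hbe.add_one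
      have := exponent_eq_one hdo (by obtain ⟨r, rfl⟩ := hbe; omega) hβ h2
      exact ⟨w, Or.inr (Or.inl ⟨ha1, by omega⟩)⟩
  · rw [Nat.not_odd_iff_even] at hβo
    have hαo : Odd α := by
      rw [← Nat.not_even_iff_odd]; exact fun h => hpar ⟨h, hβo⟩
    have hα1 : α = 1 := by
      rw [hαw]; apply odd_pow; rwa [hαw] at hαo
    have hdo : Odd d := by rw [← hαβ, hα1, add_comm]; exact hβo.add_one
    have := exponent_eq_one hdo (by obtain ⟨r, rfl⟩ := hβo; omega) hb h1
    exact ⟨v, Or.inl ⟨hav, this⟩⟩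

/-! ### Minimal polynomials of the form `X^a (X+1)^b + 1` -/

section
variable {K : Type*} [Field K] [Algebra (ZMod 2) K]

/-- The reciprocal of `X^α (X+1)^β + 1` is `X^(α+β) + (X+1)^β`. -/
lemma aeval_of_aeval_inv {z : K} (hz : z ≠ 0) {α β : ℕ}
    (h : aeval z⁻¹ (X ^ α * (X + 1) ^ β + 1 : (ZMod 2)[X]) = 0) :
    aeval z (X ^ (α + β) + (X + 1) ^ β : (ZMod 2)[X]) = 0 := by
  simp only [map_add, map_mul, map_pow, aeval_X, map_one] at h ⊢
  have e : z⁻¹ + 1 = (z + 1) * z⁻¹ := by field_simp; ring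
  rw [e, mul_pow] at h
  have e2 : z ^ (α + β) * (z⁻¹ ^ α * ((z + 1) ^ β * z⁻¹ ^ β) + 1) = 0 := by rw [h, mul_zero]
  rw [← e2, pow_add]
  have h1 : z ^ α * z⁻¹ ^ α = 1 := by rw [← mul_pow, mul_inv_cancel₀ hz, one_pow]
  have h2 : z ^ β * z⁻¹ ^ β = 1 := by rw [← mul_pow, mul_inv_cancel₀ hz, one_pow]
  linear_combination (-(z + 1) ^ β) * h1 - (z ^ α * z⁻¹ ^ α * (z + 1) ^ β) * h2

lemma monic_recip {α β : ℕ} (hα : 0 < α) :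
    (X ^ (α + β) + (X + 1) ^ β : (ZMod 2)[X]).Monic ∧
      (X ^ (α + β) + (X + 1) ^ β : (ZMod 2)[X]).natDegree = α + β := by
  have h1 : ((X + 1) ^ β : (ZMod 2)[X]).natDegree = β := by
    rw [natDegree_pow, ← C_1, natDegree_X_add_C, mul_one]
  have h2 : ((X + 1) ^ β : (ZMod 2)[X]).degree < (X ^ (α + β) : (ZMod 2)[X]).degree := by
    apply degree_lt_degree
    rw [h1, natDegree_X_pow]; omega
  refine ⟨(monic_X_pow _).add_of_left h2, ?_⟩
  rw [natDegree_add_eq_left_of_degree_lt h2, natDegree_X_pow]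

lemma natDegree_form {a b : ℕ} (ha : 0 < a) :
    (X ^ a * (X + 1) ^ b + 1 : (ZMod 2)[X]).natDegree = a + b := by
  have h1 : ((X + 1) ^ b : (ZMod 2)[X]).Monic := (monic_X_add_C 1).pow b
  have h2 : (X ^ a * (X + 1) ^ b : (ZMod 2)[X]).natDegree = a + b := by
    rw [(monic_X_pow a).natDegree_mul h1, natDegree_X_pow, natDegree_pow, ← C_1,
      natDegree_X_add_C, mul_one]
  rw [natDegree_add_eq_left_of_natDegree_lt, h2]
  rw [h2, natDegree_one]; omega

/-- If both exponents were even, `X^a (X+1)^b + 1` would be a square. -/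
lemma not_even_even {z : K} (hi : IsIntegral (ZMod 2) z) {a b : ℕ}
    (h : minpoly (ZMod 2) z = X ^ a * (X + 1) ^ b + 1) : ¬ (Even a ∧ Even b) := by
  rintro ⟨⟨i, rfl⟩, ⟨j, rfl⟩⟩
  have hirr := minpoly.irreducible hi
  have t : (2 : (ZMod 2)[X]) = 0 := CharTwo.two_eq_zero
  have e : minpoly (ZMod 2) z = (X ^ i * (X + 1) ^ j + 1) ^ 2 := by
    rw [h]; linear_combination -(X ^ i * (X + 1) ^ j) * t
  rw [e] at hirr
  exact not_irreducible_pow (by norm_num) hirr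

/-- If an exponent were zero, `X^a (X+1)^b + 1` would vanish at `0` or at `1`. -/
lemma exponents_pos {z : K} (hi : IsIntegral (ZMod 2) z) (h0 : z ≠ 0) (h1 : z ≠ 1) {a b : ℕ}
    (h : minpoly (ZMod 2) z = X ^ a * (X + 1) ^ b + 1) : 0 < a ∧ 0 < b := by
  have e : (1 + 1 : ZMod 2) = 0 := by decide
  constructor <;> rw [Nat.pos_iff_ne_zero] <;> rintro rfl
  · exact h0 (by simpa using (minpoly.root hi (y := 0) (by simp [h, e])).symm)
  · exact h1 (by simpa using (minpoly.root hi (y := 1) (by simp [h, e])).symm)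

lemma reciprocal_identity {z : K} (h0 : z ≠ 0) {a b α β : ℕ} (ha : 0 < a) (hα : 0 < α)
    (h : minpoly (ZMod 2) z = X ^ a * (X + 1) ^ b + 1)
    (h' : minpoly (ZMod 2) z⁻¹ = X ^ α * (X + 1) ^ β + 1) :
    α + β = a + b ∧ X ^ (a + b) + (X + 1) ^ β = (1 + X ^ a * (X + 1) ^ b : (ZMod 2)[X]) := by
  have r1 := aeval_of_aeval_inv h0 (h' ▸ minpoly.aeval (ZMod 2) z⁻¹)
  have r2 : aeval z⁻¹ (X ^ (a + b) + (X + 1) ^ b : (ZMod 2)[X]) = 0 :=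
    aeval_of_aeval_inv (inv_ne_zero h0) (by rw [inv_inv, ← h]; exact minpoly.aeval (ZMod 2) z)
  obtain ⟨m1, n1⟩ := monic_recip (β := β) hα
  obtain ⟨m2, n2⟩ := monic_recip (β := b) ha
  have le1 := natDegree_le_natDegree (minpoly.min (ZMod 2) z m1 r1)
  have le2 := natDegree_le_natDegree (minpoly.min (ZMod 2) z⁻¹ m2 r2)
  rw [n1, h, natDegree_form ha] at le1
  rw [n2, h', natDegree_form hα] at le2
  have hd : α + β = a + b := le_antisymm le2 le1
  refine ⟨hd, ?_⟩
  rw [← hd, minpoly.unique_of_degree_le_degree_minpoly (ZMod 2) z m1 r1, h, add_comm]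
  rw [degree_eq_natDegree m1.ne_zero, n1, hd, ← natDegree_form ha (b := b), ← h,
    degree_eq_natDegree (minpoly.ne_zero ⟨_, m1, r1⟩)]

/-- An element fixed by the `n`-th power of Frobenius lies in `F_{2^n}`. -/
lemma natDegree_dvd_of_pow {z : K} (hi : IsIntegral (ZMod 2) z) {n : ℕ} (h : z ^ 2 ^ n = z) :
    (minpoly (ZMod 2) z).natDegree ∣ n := by
  apply (minpoly.irreducible hi).natDegree_dvd_of_dvd_X_pow_card_pow_sub_X
  apply minpoly.dvd
  simp [h]

/-- With `q = 2^k`, `y = z^q` and `w = z^(q²)`, the equation of `z` and its image under the `q`-power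
Frobenius combine to `z y w = 1`. -/
lemma trinomial_order {k : ℕ} {z : K} {a b : ℕ}
    (hab : (a = 2 ^ k ∧ b = 1) ∨ (a = 1 ∧ b = 2 ^ k))
    (h : z ^ a * (z + 1) ^ b + 1 = 0) : z ^ ((2 ^ k) ^ 2 + 2 ^ k + 1) = 1 := by
  have : CharP K 2 := charP_of_injective_algebraMap (algebraMap (ZMod 2) K).injective 2
  have t : (2 : K) = 0 := CharTwo.two_eq_zero
  have hq : 2 ^ k ≠ 0 := by positivity
  have frob := congrArg (· ^ 2 ^ k) h
  rw [pow_add, pow_add, pow_one, sq, pow_mul]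
  rcases hab with ⟨rfl, rfl⟩ | ⟨rfl, rfl⟩
  · simp only [pow_one, add_pow_char_pow, mul_pow, one_pow, zero_pow hq] at h frob
    generalize (z ^ 2 ^ k) ^ 2 ^ k = w at *
    linear_combination w * h - frob
  · simp only [pow_one, add_pow_char_pow, mul_pow, one_pow, zero_pow hq] at h frob
    generalize (z ^ 2 ^ k) ^ 2 ^ k = w at *
    linear_combination z * frob - h

/-- A root `z` such that `z` and `z⁻¹` both have minimal polynomials of the given form has order
dividing `3`, `5`, `7` or `73`. The exponent `73 = 8² + 8 + 1` comes from `k = 3`, where `X^9 + X + 1`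
and `X^9 + X^8 + 1` pass the degree test `2^k + 1 ∣ 3k`. -/
lemma root_cases {z : K} (hi : IsIntegral (ZMod 2) z) (h0 : z ≠ 0) (h1 : z ≠ 1)
    (hf : ∃ a b : ℕ, minpoly (ZMod 2) z = X ^ a * (X + 1) ^ b + 1)
    (hf' : ∃ a b : ℕ, minpoly (ZMod 2) z⁻¹ = X ^ a * (X + 1) ^ b + 1) :
    z ^ 3 = 1 ∨ z ^ 5 = 1 ∨ z ^ 7 = 1 ∨
      (z ^ 73 = 1 ∧ (z ^ 9 + z + 1) * (z ^ 9 + z ^ 8 + 1) = 0) := by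
  have : CharP K 2 := charP_of_injective_algebraMap (algebraMap (ZMod 2) K).injective 2
  have t : (2 : K) = 0 := CharTwo.two_eq_zero
  obtain ⟨a, b, h⟩ := hf
  obtain ⟨α, β, h'⟩ := hf'
  obtain ⟨ha, hb⟩ := exponents_pos hi h0 h1 h
  obtain ⟨hα, hβ⟩ := exponents_pos hi.inv (inv_ne_zero h0) (inv_ne_one.mpr h1) h'
  obtain ⟨hd, e1⟩ := reciprocal_identity h0 ha hα h h'
  obtain ⟨-, e2⟩ := reciprocal_identity (inv_ne_zero h0) hα ha h' (by rw [inv_inv]; exact h)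
  rw [hd] at e2
  obtain ⟨k, hk⟩ := classification ha hb hα hβ rfl hd (not_even_even hi.inv h') e1 e2
  have hz : z ^ a * (z + 1) ^ b + 1 = 0 := by
    have := minpoly.aeval (ZMod 2) z
    rw [h] at this
    simpa using this
  have hdeg : (minpoly (ZMod 2) z).natDegree = a + b := by rw [h, natDegree_form ha]
  rw [← or_assoc] at hk
  rcases hk with hk | ⟨rfl, hk⟩
  · have hord := trinomial_order hk hz
    have hfix : z ^ 2 ^ (3 * k) = z := by
      have hq : 1 ≤ 2 ^ k := Nat.one_le_two_pow
      -- `q³ - 1 = (q² + q + 1)(q - 1)`, with `r = q - 1`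
      obtain ⟨r, hr⟩ := Nat.exists_eq_add_of_le hq
      have : 2 ^ (3 * k) = ((2 ^ k) ^ 2 + 2 ^ k + 1) * r + 1 := by
        rw [mul_comm, pow_mul, hr]; ring
      rw [this, pow_succ, pow_mul, hord, one_pow, one_mul]
    have hdvd := natDegree_dvd_of_pow hi hfix
    have hab : a + b = 2 ^ k + 1 := by omega
    rw [hdeg, hab] at hdvd
    have hk4 : k < 4 := by
      by_contra hk4
      rcases Nat.exists_eq_add_of_le (not_lt.mp hk4) with ⟨j, rfl⟩
      have := Nat.le_of_dvd (by omega) hdvd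
      have h2 : j < 2 ^ j := Nat.lt_two_pow_self
      rw [pow_add] at this
      omega
    -- `k = 0, 1, 3` give the orders `3, 7, 73`, and `k = 2` is excluded because `5 ∤ 6`.
    interval_cases k
    · exact Or.inl hord
    · exact Or.inr (Or.inr (Or.inl hord))
    · norm_num at hdvd
    · refine Or.inr (Or.inr (Or.inr ⟨hord, ?_⟩))
      rcases hk with ⟨rfl, rfl⟩ | ⟨rfl, rfl⟩
      · rw [mul_eq_zero]; right
        linear_combination hz
      · rw [mul_eq_zero]; left
        have := add_pow_char_pow (p := 2) (n := 3) z 1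
        rw [this] at hz
        linear_combination hz
  · have hpow : z ^ (2 ^ k + 1) = 1 := by
      have := add_pow_char_pow (p := 2) (n := k) z 1
      rw [← hk, pow_succ, one_pow, hk] at this
      linear_combination (-z) * this + (z + 1) * hz - (z + 1) * t
    have hfix : z ^ 2 ^ (2 * k) = z := by
      obtain ⟨r, hr⟩ := Nat.exists_eq_add_of_le (Nat.one_le_two_pow (n := k))
      have : 2 ^ (2 * k) = (2 ^ k + 1) * r + 1 := by
        rw [mul_comm, pow_mul, hr]; ring
      rw [this, pow_succ, pow_mul, hpow, one_pow, one_mul]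
    have hdvd := natDegree_dvd_of_pow hi hfix
    have hab : 1 + b = 2 ^ k := by omega
    rw [hdeg, hab] at hdvd
    have hk3 : k < 3 := by
      by_contra hk3
      rcases Nat.exists_eq_add_of_le (not_lt.mp hk3) with ⟨j, rfl⟩
      have := Nat.le_of_dvd (by omega) hdvd
      have h2 : j < 2 ^ j := Nat.lt_two_pow_self
      rw [pow_add] at this
      omega
    interval_cases k
    · omega
    · exact Or.inl hpow
    · exact Or.inr (Or.inl hpow)

end

/-! ### Roots of unity -/

lemma eq_one_of_pow {M : Type*} [Monoid M] {z : M} {i j : ℕ} (hij : i.gcd j = 1)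
    (hi : z ^ i = 1) (hj : z ^ j = 1) : z = 1 := by
  have := pow_gcd_eq_one.mpr ⟨hi, hj⟩
  rwa [hij, pow_one] at this

/-- Canaday's Theorem 8: the only complete binary polynomials
`A = x^{2m} + ⋯ + x + 1` of even degree `2m ≥ 2` all of whose irreducible
factors have the form `x^α(x+1)^β + 1` are `x²+x+1`, `x⁴+x³+x²+x+1` and
`(x³+x+1)(x³+x²+1)`. -/
theorem statement12 (m : ℕ) (hm : 0 < m) (A : Polynomial (ZMod 2))
    (hA : A = ∑ i ∈ Finset.range (2 * m + 1), X ^ i)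
    (hfac : ∀ Q : Polynomial (ZMod 2), Irreducible Q → Q ∣ A →
      ∃ α β : ℕ, Q = X ^ α * (X + 1) ^ β + 1) :
    A = X ^ 2 + X + 1 ∨ A = X ^ 4 + X ^ 3 + X ^ 2 + X + 1 ∨
      A = (X ^ 3 + X + 1) * (X ^ 3 + X ^ 2 + 1) := by
  have t : (2 : (ZMod 2)[X]) = 0 := CharTwo.two_eq_zero
  have hNZ : NeZero ((2 * m + 1 : ℕ) : ZMod 2) := ⟨by
    rw [Ne, ZMod.natCast_eq_zero_iff]; omega⟩
  let K := AlgebraicClosure (ZMod 2)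
  have hint : ∀ z : K, IsIntegral (ZMod 2) z := fun z => Algebra.IsIntegral.isIntegral z
  have hform : ∀ z : K, z ^ (2 * m + 1) = 1 → z ≠ 1 →
      ∃ a b : ℕ, minpoly (ZMod 2) z = X ^ a * (X + 1) ^ b + 1 := by
    intro z hz hz1
    apply hfac _ (minpoly.irreducible (hint z))
    apply minpoly.dvd
    have := geom_sum_mul z (2 * m + 1)
    rw [hz, sub_self] at this
    rw [hA]
    simpa [sub_ne_zero.mpr hz1] using this
  have hcases : ∀ z : K, z ^ (2 * m + 1) = 1 → z ≠ 1 → z ^ 3 = 1 ∨ z ^ 5 = 1 ∨ z ^ 7 = 1 ∨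
      (z ^ 73 = 1 ∧ (z ^ 9 + z + 1) * (z ^ 9 + z ^ 8 + 1) = 0) := by
    intro z hz hz1
    have hz0 : z ≠ 0 := by rintro rfl; simp at hz
    exact root_cases (hint z) hz0 hz1 (hform z hz hz1)
      (hform z⁻¹ (by rw [inv_pow, hz, inv_one]) (inv_ne_one.mpr hz1))
  obtain ⟨ζ, hζ⟩ := HasEnoughRootsOfUnity.exists_primitiveRoot K (2 * m + 1)
  have prime_case : ∀ p : ℕ, p.Prime → ζ ^ p = 1 → 2 * m + 1 = p := by
    intro p hp h
    rcases (Nat.dvd_prime hp).mp ((hζ.pow_eq_one_iff_dvd p).mp h) with h | h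
    · omega
    · exact h
  rcases hcases ζ hζ.pow_eq_one (hζ.ne_one (by omega)) with h | h | h | ⟨h, -⟩
  · left
    rw [hA, prime_case 3 (by norm_num) h]
    simp [Finset.sum_range_succ]; ring
  · right; left
    rw [hA, prime_case 5 (by norm_num) h]
    simp [Finset.sum_range_succ]; ring
  · right; right
    rw [hA, prime_case 7 (by norm_num) h]
    simp only [Finset.sum_range_succ, Finset.sum_range_zero]
    linear_combination (-X ^ 3) * t
  · exfalso
    have hn := prime_case 73 (by norm_num) h
    rw [hn] at hcases hζ
    -- `G` has degree 19 but would have all 73 roots of unity among its roots.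
    let G : K[X] := (X - C 1) * ((X ^ 9 + X + 1) * (X ^ 9 + X ^ 8 + 1))
    have d1 : (X ^ 9 + X + 1 : K[X]).natDegree = 9 := by compute_degree!
    have d2 : (X ^ 9 + X ^ 8 + 1 : K[X]).natDegree = 9 := by compute_degree!
    have n1 : (X ^ 9 + X + 1 : K[X]) ≠ 0 := by rintro h; simp [h] at d1
    have n2 : (X ^ 9 + X ^ 8 + 1 : K[X]) ≠ 0 := by rintro h; simp [h] at d2
    have hG0 : G ≠ 0 := mul_ne_zero (X_sub_C_ne_zero 1) (mul_ne_zero n1 n2)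
    have hGd : G.natDegree = 19 := by
      rw [natDegree_mul (X_sub_C_ne_zero 1) (mul_ne_zero n1 n2), natDegree_mul n1 n2, d1, d2,
        natDegree_X_sub_C]
    have hle := card_le_degree_of_subset_roots (p := G) (Z := nthRootsFinset 73 (1 : K)) (by
      intro z hz
      rw [Finset.mem_val, mem_nthRootsFinset (by norm_num)] at hz
      rw [mem_roots hG0, IsRoot.def]
      by_cases hz1 : z = 1
      · simp [G, hz1]
      rcases hcases z hz hz1 with h | h | h | ⟨-, h⟩
      · exact absurd (eq_one_of_pow (by norm_num) h hz) hz1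
      · exact absurd (eq_one_of_pow (by norm_num) h hz) hz1
      · exact absurd (eq_one_of_pow (by norm_num) h hz) hz1
      · simp [G, mul_eq_zero.mp h])
    rw [hζ.card_nthRootsFinset, hGd] at hle
    omega
end

section
/- For a positive integer m, the polynomial P = x(x+1)^{2^m−1} + 1 ∈ F₂[x] is irreducible if and only if m = 1 or m = 2. -/
open Polynomial

/-!
Write `q = 2 ^ m` and `P = x(x+1)^(q-1) + 1`, a polynomial of degree `q`. Modulo two,
`(x + 1) P = x (x + 1) ^ q + x + 1 = x ^ (q + 1) + 1`, so a root `a` of `P` in a commutative ring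
of characteristic two satisfies `a * a ^ q = 1`: the Frobenius power `a ↦ a ^ q` inverts `a`, and
hence `a ^ (q ^ 2) = a`. So `P` divides `x ^ (2 ^ (2 * m)) - x` (`dvd_X_pow_sub_X`), and if `P` is
irreducible its degree `2 ^ m` divides `2 * m`, which forces `m ≤ 2`.

Conversely, for `m = 1, 2` the polynomial is the cyclotomic polynomial of index `3`, resp. `5`, and
it is irreducible because `2` is a primitive root modulo `3` and modulo `5`.
-/

lemma natDegree_canaday (m : ℕ) :
    (X * (X + 1) ^ (2 ^ m - 1) + 1 : Polynomial (ZMod 2)).natDegree = 2 ^ m := by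
  have hne : ((X + 1) ^ (2 ^ m - 1) : Polynomial (ZMod 2)) ≠ 0 :=
    ((monic_X_add_C (1 : ZMod 2)).pow _).ne_zero
  have h : (X * (X + 1) ^ (2 ^ m - 1) : Polynomial (ZMod 2)).natDegree = 2 ^ m := by
    rw [natDegree_X_mul hne, show (1 : Polynomial (ZMod 2)) = C 1 from rfl,
      natDegree_pow_X_add_C]
    exact Nat.sub_add_cancel Nat.one_le_two_pow
  rw [show (1 : Polynomial (ZMod 2)) = C 1 from rfl, natDegree_add_C]
  exact h

/-- Raising to the power `q = 2 ^ m` inverts a root `a`, so doing it twice gives `a` back. -/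
lemma pow_eq_self_of_root {R : Type*} [CommRing R] [CharP R 2] (m : ℕ) (a : R)
    (ha : a * (a + 1) ^ (2 ^ m - 1) + 1 = 0) : a ^ 2 ^ (2 * m) = a := by
  have two : (2 : R) = 0 := CharTwo.two_eq_zero
  have hsplit : (a + 1) ^ 2 ^ m = (a + 1) ^ (2 ^ m - 1) * (a + 1) := by
    rw [← pow_succ, Nat.sub_add_cancel Nat.one_le_two_pow]
  have h1 : a * (a + 1) ^ 2 ^ m = a + 1 := by
    rw [hsplit]
    linear_combination (a + 1) * ha - (a + 1) * two
  rw [add_pow_char_pow, one_pow] at h1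
  have h2 : a ^ 2 ^ m * (a ^ 2 ^ (2 * m) + 1) = a ^ 2 ^ m + 1 := by
    have := congrArg (· ^ 2 ^ m) h1
    simp only [mul_pow, add_pow_char_pow, one_pow] at this
    rwa [← pow_mul a (2 ^ m) (2 ^ m), ← pow_add, ← two_mul] at this
  -- `h1` amounts to `a * a ^ q = 1`, and `h2` to its `q`-th power `a ^ q * a ^ (q ^ 2) = 1`.
  linear_combination a * h2 - a ^ 2 ^ (2 * m) * h1

lemma dvd_X_pow_sub_X (m : ℕ) :
    (X * (X + 1) ^ (2 ^ m - 1) + 1 : Polynomial (ZMod 2)) ∣ X ^ 2 ^ (2 * m) - X := by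
  set P : Polynomial (ZMod 2) := X * (X + 1) ^ (2 ^ m - 1) + 1 with hP
  have hdeg : P.natDegree = 2 ^ m := natDegree_canaday m
  have : Nontrivial (AdjoinRoot P) := by
    refine AdjoinRoot.nontrivial P fun h => ?_
    rw [natDegree_eq_of_degree_eq_some h] at hdeg
    exact (pow_ne_zero m two_ne_zero) hdeg.symm
  have : CharP (AdjoinRoot P) 2 := charP_of_injective_algebraMap
    (algebraMap (ZMod 2) (AdjoinRoot P)).injective 2
  rw [← AdjoinRoot.mk_eq_zero, map_sub, map_pow, AdjoinRoot.mk_X, sub_eq_zero]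
  apply pow_eq_self_of_root
  simpa [hP] using AdjoinRoot.mk_self (f := P)

lemma irreducible_one :
    Irreducible (X * (X + 1) ^ (2 ^ 1 - 1) + 1 : Polynomial (ZMod 2)) := by
  refine ZMod.irreducible_of_dvd_cyclotomic_of_natDegree (p := 2) (n := 3) (by norm_num) ?_ ?_
  · rw [cyclotomic_three]
    refine dvd_of_eq ?_
    norm_num
    ring
  · rw [natDegree_canaday]
    symm
    rw [pow_one]
    apply orderOf_eq_prime <;> decide

lemma irreducible_two :
    Irreducible (X * (X + 1) ^ (2 ^ 2 - 1) + 1 : Polynomial (ZMod 2)) := by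
  refine ZMod.irreducible_of_dvd_cyclotomic_of_natDegree (p := 2) (n := 5) (by norm_num) ?_ ?_
  · have : Fact (Nat.Prime 5) := ⟨by norm_num⟩
    have two : (2 : Polynomial (ZMod 2)) = 0 := CharTwo.two_eq_zero
    rw [cyclotomic_prime]
    refine dvd_of_eq ?_
    simp only [Finset.sum_range_succ, Finset.sum_range_zero]
    norm_num
    linear_combination (X ^ 3 + X ^ 2) * two
  · rw [natDegree_canaday]
    symm
    apply orderOf_eq_prime_pow (p := 2) (n := 1) <;> decide

/-- Canaday's Lemma 2: for `m ≥ 1`, the polynomial `x(x+1)^{2^m−1} + 1 ∈ F₂[x]`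
is irreducible if and only if `m = 1` or `m = 2`. -/
theorem statement14 (m : ℕ) (hm : 0 < m) :
    Irreducible (X * (X + 1) ^ (2 ^ m - 1) + 1 : Polynomial (ZMod 2)) ↔ m = 1 ∨ m = 2 := by
  constructor
  · intro h
    have hd := h.natDegree_dvd_of_dvd_X_pow_card_pow_sub_X (n := 2 * m)
      (by simpa using dvd_X_pow_sub_X m)
    rw [natDegree_canaday] at hd
    have hle := Nat.le_of_dvd (by lia) hd
    by_contra hne
    obtain ⟨k, rfl⟩ : ∃ k, m = k + 3 := ⟨m - 3, by lia⟩
    have : k < 2 ^ k := Nat.lt_two_pow_self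
    rw [pow_add] at hle
    lia
  · rintro (rfl | rfl)
    · exact irreducible_one
    · exact irreducible_two
end
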